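/- arXiv:1701.00026 — 2 statements merged into one kernel-verified Lean document; each statement's English description precedes it below -/
import Mathlib

section
/- Let R be a commutative ring. The following are equivalent: (1) every R-module is almost injective; (2) every R-module M contains a semisimple submodule N such that the quotient M/N is injective. -/
universe u v w

section Defs

variable (A : Type u) [Ring A]

/-- The radical of a module: the intersection of all maximal submodules
(`⊤` if there are none). -/
def modRad (M : Type w) [AddCommGroup M] [Module A M] : Submodule A M :=
  sInf {P : Submodule A M | IsCoatom P}

/-- The socle of a module: the sum of all simple submodules. -/
def modSocle (M : Type w) [AddCommGroup M] [Module A M] : Submodule A M :=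
  sSup {S : Submodule A M | IsAtom S}

/-- A submodule `N` of `M` is small if `N ⊔ K = ⊤` implies `K = ⊤`. -/
def IsSmallSubmodule {M : Type w} [AddCommGroup M] [Module A M] (N : Submodule A M) : Prop :=
  ∀ K : Submodule A M, N ⊔ K = ⊤ → K = ⊤

/-- `N` is a direct summand of `M`. -/
def IsDirectSummand {M : Type w} [AddCommGroup M] [Module A M] (N : Submodule A M) : Prop :=
  ∃ N' : Submodule A M, IsCompl N N'

/-- `N` is an essential submodule of `M`. -/
def IsEssentialSubmodule {M : Type w} [AddCommGroup M] [Module A M] (N : Submodule A M) : Prop :=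
  ∀ K : Submodule A M, K ≠ ⊥ → N ⊓ K ≠ ⊥

/-- An `I₀`-module: every non-small submodule contains a nonzero direct summand. -/
def IsI0Module (M : Type w) [AddCommGroup M] [Module A M] : Prop :=
  ∀ N : Submodule A M, ¬ IsSmallSubmodule A N →
    ∃ D : Submodule A M, D ≠ ⊥ ∧ D ≤ N ∧ IsDirectSummand A D

/-- A `V`-module: every proper submodule is an intersection of maximal submodules. -/
def IsVModule (M : Type w) [AddCommGroup M] [Module A M] : Prop :=
  ∀ N : Submodule A M, N ≠ ⊤ →
    ∃ S : Set (Submodule A M), (∀ P ∈ S, IsCoatom P) ∧ N = sInf S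

/-- A local module: it has a proper submodule containing every proper submodule. -/
def IsLocalModule (M : Type w) [AddCommGroup M] [Module A M] : Prop :=
  ∃ P : Submodule A M, P ≠ ⊤ ∧ ∀ K : Submodule A M, K ≠ ⊤ → K ≤ P

/-- A module of composition length two: it has a submodule which is simultaneously an atom
and a coatom of its submodule lattice, i.e. a composition series `0 ⋖ S ⋖ M`. -/
def HasLengthTwo (M : Type w) [AddCommGroup M] [Module A M] : Prop :=
  ∃ S : Submodule A M, IsAtom S ∧ IsCoatom S

/-- A uniform module: nonzero, and any two nonzero submodules intersect nontrivially. -/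
def IsUniformModule (M : Type w) [AddCommGroup M] [Module A M] : Prop :=
  Nontrivial M ∧ ∀ K L : Submodule A M, K ≠ ⊥ → L ≠ ⊥ → K ⊓ L ≠ ⊥

/-- A uniserial module: submodules are linearly ordered by inclusion. -/
def IsUniserialModule (M : Type w) [AddCommGroup M] [Module A M] : Prop :=
  ∀ K L : Submodule A M, K ≤ L ∨ L ≤ K

/-- A semiartinian module: every nonzero quotient has a nonzero socle. -/
def IsSemiartinianModule (M : Type w) [AddCommGroup M] [Module A M] : Prop :=
  ∀ N : Submodule A M, N ≠ ⊤ → modSocle A (M ⧸ N) ≠ ⊥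

/-- `U` is `M`-injective: homomorphisms from submodules of `M` to `U` extend to `M`. -/
def RelInjective (M : Type v) (U : Type w) [AddCommGroup M] [Module A M]
    [AddCommGroup U] [Module A U] : Prop :=
  ∀ (K : Submodule A M) (f : K →ₗ[A] U), ∃ g : M →ₗ[A] U, ∀ x : K, g (x : M) = f x

/-- `P` is `M`-projective: homomorphisms from `P` to quotients of `M` lift to `M`. -/
def RelProjective (M : Type v) (P : Type w) [AddCommGroup M] [Module A M]
    [AddCommGroup P] [Module A P] : Prop :=
  ∀ (K : Submodule A M) (f : P →ₗ[A] M ⧸ K), ∃ h : P →ₗ[A] M, ∀ x : P, K.mkQ (h x) = f x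

/-- `M` is almost `N`-projective. -/
def AlmostNProjective (M : Type v) (N : Type w) [AddCommGroup M] [Module A M]
    [AddCommGroup N] [Module A N] : Prop :=
  ∀ (K : Submodule A N) (f : M →ₗ[A] N ⧸ K),
    (∃ h : M →ₗ[A] N, ∀ x : M, K.mkQ (h x) = f x) ∨
    (∃ N' : Submodule A N, N' ≠ ⊥ ∧ IsDirectSummand A N' ∧
      ∃ h' : N' →ₗ[A] M, ∀ x : N', K.mkQ (x : N) = f (h' x))

/-- `M` is almost projective: almost `N`-projective for every module `N`. -/
def IsAlmostProjective (M : Type w) [AddCommGroup M] [Module A M] : Prop :=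
  ∀ (N : Type v) [AddCommGroup N] [Module A N], AlmostNProjective A M N

/-- `M` is almost `N`-injective. -/
def AlmostNInjective (M : Type v) (N : Type w) [AddCommGroup M] [Module A M]
    [AddCommGroup N] [Module A N] : Prop :=
  ∀ (N₀ : Submodule A N) (f : N₀ →ₗ[A] M),
    (∃ g : N →ₗ[A] M, ∀ x : N₀, g (x : N) = f x) ∨
    (∃ π : Module.End A N, IsIdempotentElem π ∧ π ≠ 0 ∧
      ∃ h : M →ₗ[A] LinearMap.range π, ∀ x : N₀, (↑(h (f x)) : N) = π (x : N))

/-- `M` is almost injective: almost `N`-injective for every module `N`. -/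
def IsAlmostInjective (M : Type w) [AddCommGroup M] [Module A M] : Prop :=
  ∀ (N : Type v) [AddCommGroup N] [Module A N], AlmostNInjective A M N

/-- `N` belongs to `σ(M)`: `N` is isomorphic to a submodule of a quotient of a direct sum
of copies of `M`. -/
def InSigma (M : Type v) [AddCommGroup M] [Module A M]
    (N : Type w) [AddCommGroup N] [Module A N] : Prop :=
  ∃ (ι : Type v) (K : Submodule A (ι →₀ M)) (P : Submodule A ((ι →₀ M) ⧸ K)),
    Nonempty (N ≃ₗ[A] P)

/-- `P` is a projective object of the category `σ(M)`. -/
def ProjInSigma (M : Type v) [AddCommGroup M] [Module A M]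
    (P : Type w) [AddCommGroup P] [Module A P] : Prop :=
  InSigma A M P ∧
  ∀ (X Y : Type v) [AddCommGroup X] [Module A X] [AddCommGroup Y] [Module A Y],
    InSigma A M X → InSigma A M Y →
    ∀ (g : X →ₗ[A] Y), Function.Surjective g →
    ∀ f : P →ₗ[A] Y, ∃ h : P →ₗ[A] X, ∀ x : P, g (h x) = f x

/-- `M` is an almost `V`-module: every simple module is almost `N`-injective
for every `N ∈ σ(M)`. -/
def IsAlmostVModule (M : Type v) [AddCommGroup M] [Module A M] : Prop :=
  ∀ (S : Type v) [AddCommGroup S] [Module A S], IsSimpleModule A S →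
    ∀ (N : Type v) [AddCommGroup N] [Module A N], InSigma A M N → AlmostNInjective A S N

end Defs

/-!
Both properties pass to quotient rings, and modules in `Type v` only see the quotient rings of `R`
that live in `Type v`; so both are compared with a condition on these quotients `S`: the ring
`S ⧸ Soc S` is semisimple and each maximal ideal `m` is pure or short, that is, there are `a ∈ m`
and `b ∉ m` with `m a = 0` and `b m ⊆ S a`.

Over such a ring, a partial linear map on `Y` defined on the socle of `Y` extends to `Y` as soon as
it sends `m`-torsion into `m M` at each short `m`; this is proved one element at a time, with Zorn's
lemma. If some `m`-torsion vector `u` has `f u ∉ m M`, then projecting onto `S u` (or onto `S y`,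
where `a y = u`) factors through `f`, so every module is almost injective. If `N ⊆ Soc M` is a
complement of the radical part of the socle, the obstruction disappears in `M ⧸ N`, which is
therefore injective.

Conversely, if every module is almost injective, then `Y ⧸ K` is semisimple for every essential
`K`, and the socle of `S` is essential: a ring with zero socle would be von Neumann regular, and a
maximal family of orthogonal idempotents `e` in a maximal ideal, with maximal ideals `n_e ∌ e`,
would contradict the semisimplicity of `S ⧸ ⋂ n_e`. If every module is semisimple-by-injective and
`m` is not pure, take `a ≠ 0` in `m` with `m a = 0` and an ideal `B ∋ a` with `B ⧸ S a` semisimple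
and `S ⧸ B` injective. The latter has no `m`-torsion if `B ⊆ m`, whereas a self-injective ring that
is semisimple modulo its socle has torsion at every maximal ideal: otherwise some `t m ⊆ Soc S`,
`t ∉ m`, is a direct sum of two parts that are not finitely generated, and an element `w` acting as
`1` on one and as `0` on the other satisfies `t w (1 - w) = 0`, forcing `w ∈ m` or `1 - w ∈ m`.
Hence `B ⊄ m`, and `B` supplies the element `b`.
-/

namespace AlmostInjective

open Submodule

section Socle

variable {R : Type*} [Ring R] {M N : Type*} [AddCommGroup M] [Module R M]
  [AddCommGroup N] [Module R N]

instance isSemisimpleModule_modSocle : IsSemisimpleModule R (modSocle R M) := by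
  rw [modSocle, sSup_eq_iSup]
  refine isSemisimpleModule_biSup_of_isSemisimpleModule_submodule fun S hS ↦ ?_
  have := isSimpleModule_iff_isAtom.2 hS
  infer_instance

theorem le_modSocle (S : Submodule R M) [IsSemisimpleModule R S] : S ≤ modSocle R M := by
  calc S = (sSup {T : Submodule R S | IsSimpleModule R T}).map S.subtype := by
        rw [IsSemisimpleModule.sSup_simples_eq_top, Submodule.map_top, range_subtype]
    _ ≤ modSocle R M := by
        rw [sSup_eq_iSup', Submodule.map_iSup]
        refine iSup_le fun T ↦ le_sSup (isSimpleModule_iff_isAtom.1 ?_)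
        have : IsSimpleModule R T.1 := T.2
        exact .congr (T.1.equivMapOfInjective _ S.subtype_injective).symm

theorem map_modSocle_le (f : M →ₗ[R] N) : (modSocle R M).map f ≤ modSocle R N :=
  have : IsSemisimpleModule R ((modSocle R M).map f) := by
    rw [← LinearMap.range_domRestrict]
    exact .range _
  le_modSocle _

theorem map_mem_modSocle (f : M →ₗ[R] N) {x : M} (hx : x ∈ modSocle R M) :
    f x ∈ modSocle R N :=
  map_modSocle_le f (mem_map_of_mem hx)

theorem smul_mem_modSocle {s : R} (hs : s ∈ modSocle R R) (x : M) : s • x ∈ modSocle R M :=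
  map_mem_modSocle (LinearMap.toSpanSingleton R M x) hs

end Socle

section Torsion

variable {R : Type*} [CommRing R] {M : Type*} [AddCommGroup M] [Module R M]

theorem mem_torsionBySet {s : Set R} {x : M} :
    x ∈ torsionBySet R M s ↔ ∀ a ∈ s, a • x = 0 := by
  simp [mem_torsionBySet_iff]

theorem isSemisimpleModule_of_isTorsionBySet (m : Ideal R) [m.IsMaximal]
    (h : Module.IsTorsionBySet R M m) : IsSemisimpleModule R M := by
  let := h.module
  let := Ideal.Quotient.field m
  exact h.isSemisimpleModule_iff.1 inferInstance

theorem torsionBySet_le_modSocle (m : Ideal R) [m.IsMaximal] :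
    torsionBySet R M m ≤ modSocle R M :=
  have := isSemisimpleModule_of_isTorsionBySet m (torsionBySet_isTorsionBySet (M := M) (m : Set R))
  le_modSocle _

theorem modSocle_le {K : Submodule R M}
    (h : ∀ m : Ideal R, m.IsMaximal → torsionBySet R M m ≤ K) : modSocle R M ≤ K := by
  refine sSup_le fun S hS ↦ ?_
  have := isSimpleModule_iff_isAtom.2 hS
  refine le_trans (fun x hx ↦ ?_) (h (Module.annihilator R S) IsSimpleModule.annihilator_isMaximal)
  exact mem_torsionBySet.2 fun r hr ↦
    congrArg Subtype.val (Module.mem_annihilator.1 hr (⟨x, hx⟩ : S))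

theorem one_sub_notMem {m : Ideal R} (hm : m ≠ ⊤) {z : R} (hz : z ∈ m) : 1 - z ∉ m := fun h ↦
  hm ((Ideal.eq_top_iff_one m).2 (by simpa using add_mem h hz))

theorem exists_one_sub_smul_mem_torsionBySet [IsSemisimpleModule R M] (I : Ideal R) (x : M) :
    ∃ z ∈ I, (1 - z) • x ∈ torsionBySet R M I := by
  obtain ⟨D, hD⟩ := exists_isCompl (I • span R {x})
  obtain ⟨c, hc, d, hd, hcd⟩ := mem_sup.1 (hD.sup_eq_top ▸ mem_top (x := x))
  obtain ⟨z, hz, rfl⟩ := mem_smul_span_singleton.1 hc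
  have hdx : (1 - z) • x = d := by rw [sub_smul, one_smul, sub_eq_iff_eq_add', hcd]
  refine ⟨z, hz, mem_torsionBySet.2 fun μ hμ ↦ ?_⟩
  have hmem : μ • (1 - z) • x ∈ I • span R {x} :=
    smul_mem_smul hμ (smul_mem _ _ (mem_span_singleton_self x))
  exact disjoint_def.1 hD.disjoint _ hmem (smul_mem _ _ (hdx ▸ hd))

theorem exists_one_sub_smul_mem_torsionBySet_of_mem_modSocle (I : Ideal R) {x : M}
    (hx : x ∈ modSocle R M) : ∃ z ∈ I, (1 - z) • x ∈ torsionBySet R M I := by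
  obtain ⟨z, hz, h⟩ := exists_one_sub_smul_mem_torsionBySet I (⟨x, hx⟩ : modSocle R M)
  exact ⟨z, hz, mem_torsionBySet.2 fun μ hμ ↦ congrArg Subtype.val (mem_torsionBySet.1 h μ hμ)⟩

end Torsion

section Extension

variable {R : Type*} [Ring R] {M Y : Type*} [AddCommGroup M] [Module R M]
  [AddCommGroup Y] [Module R Y]

theorem exists_linearPMap_extend {f : Y →ₗ.[R] M} {y : Y} {v : M}
    (hv : ∀ (r : R) (hr : r • y ∈ f.domain), f ⟨r • y, hr⟩ = r • v) :
    ∃ f' : Y →ₗ.[R] M, f ≤ f' ∧ y ∈ f'.domain := by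
  have hzero (c : R) (hc : c • y = 0) : c • v = 0 := by
    have hmem : c • y ∈ f.domain := hc ▸ f.domain.zero_mem
    rw [← hv c hmem, show (⟨c • y, hmem⟩ : f.domain) = 0 from Subtype.ext hc, f.map_zero]
  let p : Y →ₗ.[R] M := LinearPMap.mkSpanSingleton' y v hzero
  have hagree (x : f.domain) (z : p.domain) (hxz : (x : Y) = z) : f x = p z := by
    obtain ⟨x, hx⟩ := x
    obtain ⟨z, hz⟩ := z
    obtain ⟨r, rfl⟩ := mem_span_singleton.1 hz
    obtain rfl : x = r • y := hxz
    rw [hv, LinearPMap.mkSpanSingleton'_apply, RingHom.id_apply]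
  exact ⟨f.sup _ hagree, LinearPMap.left_le_sup _ _ _,
    (LinearPMap.right_le_sup f _ hagree).1 (mem_span_singleton_self y)⟩

theorem exists_linearMap_extend_of_forall_notMem_domain (f₀ : Y →ₗ.[R] M)
    (h : ∀ f : Y →ₗ.[R] M, f₀ ≤ f → ∀ y ∉ f.domain, ∃ y' ∉ f.domain, ∃ v : M,
      ∀ (r : R) (hr : r • y' ∈ f.domain), f ⟨r • y', hr⟩ = r • v) :
    ∃ g : Y →ₗ[R] M, ∀ x : f₀.domain, g x = f₀ x := by
  obtain ⟨f, hf₀, hmax⟩ := zorn_le_nonempty₀ (Set.univ : Set (Y →ₗ.[R] M))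
    (fun c _ hc y _ ↦ ⟨LinearPMap.sSup c hc.directedOn, trivial,
      fun z hz ↦ LinearPMap.le_sSup hc.directedOn hz⟩) f₀ trivial
  have htop (y : Y) : y ∈ f.domain := by
    by_contra hy
    obtain ⟨y', hy', v, hv⟩ := h f hf₀ y hy
    obtain ⟨f', hle, hmem⟩ := exists_linearPMap_extend hv
    exact hy' ((hmax.le_of_ge trivial hle).1 hmem)
  exact ⟨f.toFun ∘ₗ LinearMap.id.codRestrict f.domain htop, fun x ↦ (hf₀.2 rfl).symm⟩

theorem exists_linearPMap_modSocle_le_domain (f : Y →ₗ.[R] M) :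
    ∃ f' : Y →ₗ.[R] M, f ≤ f' ∧ modSocle R Y ≤ f'.domain := by
  obtain ⟨D, hD⟩ := exists_isCompl (f.domain.comap (modSocle R Y).subtype)
  have hdisj : Disjoint f.domain (⟨D.map (modSocle R Y).subtype, 0⟩ : Y →ₗ.[R] M).domain := by
    rw [disjoint_def]
    rintro _ hx ⟨d, hd, rfl⟩
    rw [disjoint_def.1 hD.disjoint d hx hd, _root_.map_zero]
  refine ⟨f.sup _ (LinearPMap.sup_h_of_disjoint f _ hdisj), LinearPMap.left_le_sup _ _ _, ?_⟩
  calc modSocle R Y = (f.domain.comap (modSocle R Y).subtype ⊔ D).map (modSocle R Y).subtype := by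
        rw [hD.sup_eq_top, Submodule.map_top, range_subtype]
    _ ≤ _ := by
        rw [Submodule.map_sup]
        exact sup_le_sup_right (map_comap_le _ _) _

end Extension

section PureOrShort

variable {R : Type*} [CommRing R] {M : Type*} [AddCommGroup M] [Module R M]

/-- An ideal `m` is pure if `R ⧸ m` is flat, encoded elementwise. -/
def IsPure (m : Ideal R) : Prop :=
  ∀ x ∈ m, ∃ r ∈ m, r * x = x

/-- `a` and `b` witness that the maximal ideal `m` is an isolated point of the spectrum whose local
ring has length at most two: the basic open set of `b` is `{m}`, and the maximal ideal of the
localization away from `b` is generated by `a` and has square zero. The case `a = 0` is allowed. -/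
structure IsShortAt (m : Ideal R) (a b : R) : Prop where
  left_mem : a ∈ m
  right_notMem : b ∉ m
  mul_left_eq_zero : ∀ z ∈ m, z * a = 0
  exists_mul_right_eq : ∀ z ∈ m, ∃ r, b * z = r * a

variable (R) in
/-- The ring-theoretic condition characterizing the rings of the main theorem: `R` is semisimple
modulo its socle, and each maximal ideal is pure or is an isolated point with local ring of length
at most two. -/
structure IsPureOrShortRing : Prop where
  isSemisimpleModule_quotient : IsSemisimpleModule R (R ⧸ modSocle R R)
  isPure_or_isShortAt : ∀ m : Ideal R, m.IsMaximal → IsPure m ∨ ∃ a b, IsShortAt m a b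

theorem IsPure.exists_smul_eq {m : Ideal R} (hm : IsPure m) {x : M}
    (hx : x ∈ m • (⊤ : Submodule R M)) : ∃ r ∈ m, r • x = x := by
  induction hx using smul_induction_on' with
  | smul z hz y _ =>
    obtain ⟨r, hr, hrz⟩ := hm z hz
    exact ⟨r, hr, by rw [smul_smul, hrz]⟩
  | add y _ z _ hy hz =>
    obtain ⟨r, hr, hry⟩ := hy
    obtain ⟨s, hs, hsz⟩ := hz
    refine ⟨r + s - r * s, m.sub_mem (m.add_mem hr hs) (m.mul_mem_right _ hr), ?_⟩
    calc (r + s - r * s) • (y + z) = r • y + s • z + s • (y - r • y) + r • (z - s • z) := by module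
      _ = y + z := by rw [hry, hsz, sub_self, sub_self, smul_zero, smul_zero, add_zero, add_zero]

namespace IsShortAt

variable {m : Ideal R} {a b : R}

theorem smul_mem_torsionBySet (hm : IsShortAt m a b) (x : M) : a • x ∈ torsionBySet R M m :=
  mem_torsionBySet.2 fun μ hμ ↦ by rw [smul_smul, hm.mul_left_eq_zero μ hμ, zero_smul]

theorem exists_smul_eq_smul (hm : IsShortAt m a b) {x : M} (hx : x ∈ m • (⊤ : Submodule R M)) :
    ∃ w, b • x = a • w := by
  induction hx using smul_induction_on' with
  | smul z hz y _ =>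
    obtain ⟨r, hr⟩ := hm.exists_mul_right_eq z hz
    exact ⟨r • y, by rw [smul_smul, hr, smul_smul, mul_comm]⟩
  | add y _ z _ hy hz =>
    obtain ⟨v, hv⟩ := hy
    obtain ⟨w, hw⟩ := hz
    exact ⟨v + w, by rw [smul_add, smul_add, hv, hw]⟩

theorem exists_eq_smul [m.IsMaximal] (hm : IsShortAt m a b) {x : M}
    (hx : x ∈ m • (⊤ : Submodule R M)) (hxm : x ∈ torsionBySet R M m) :
    ∃ w, x = a • w := by
  obtain ⟨w, hw⟩ := hm.exists_smul_eq_smul hx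
  obtain ⟨c, μ, hμ, hc⟩ := Ideal.IsMaximal.exists_inv ‹_› hm.right_notMem
  refine ⟨c • w, ?_⟩
  calc x = c • b • x + μ • x := by rw [smul_smul, ← add_smul, hc, one_smul]
    _ = a • c • w := by rw [mem_torsionBySet.1 hxm μ hμ, hw, add_zero, smul_comm]

end IsShortAt

theorem exists_notMem_mul_mem (N : Ideal R) [IsSemisimpleModule R (R ⧸ N)] {m : Ideal R}
    (hm : m ≠ ⊤) : ∃ t ∉ m, ∀ μ ∈ m, μ * t ∈ N := by
  obtain ⟨z, hz, h⟩ := exists_one_sub_smul_mem_torsionBySet m (N.mkQ 1)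
  refine ⟨1 - z, one_sub_notMem hm hz, fun μ hμ ↦ ?_⟩
  have hμz := mem_torsionBySet.1 h μ hμ
  rwa [← map_smul, ← map_smul, ← LinearMap.mem_ker, ker_mkQ, smul_eq_mul, smul_eq_mul, mul_one]
    at hμz

theorem isShortAt_zero_of_mem_modSocle {m : Ideal R} {s : R} (hs : s ∈ modSocle R R)
    (hm : m.IsPrime) (hsm : s ∉ m) : ∃ b, IsShortAt m 0 b := by
  obtain ⟨z, hz, h⟩ := exists_one_sub_smul_mem_torsionBySet_of_mem_modSocle m hs
  refine ⟨(1 - z) * s, m.zero_mem, hm.mul_notMem (one_sub_notMem hm.ne_top hz) hsm,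
    fun _ _ ↦ mul_zero _, fun μ hμ ↦ ⟨0, ?_⟩⟩
  rw [zero_mul, mul_comm]
  exact mem_torsionBySet.1 h μ hμ

end PureOrShort

section ExtensionPureOrShort

variable {R : Type*} [CommRing R] {M Y : Type*} [AddCommGroup M] [Module R M]
  [AddCommGroup Y] [Module R Y] {m : Ideal R}

theorem apply_mem_torsionBySet {s : Set R} (f : Y →ₗ.[R] M) {x : f.domain}
    (hx : (x : Y) ∈ torsionBySet R Y s) : f x ∈ torsionBySet R M s :=
  mem_torsionBySet.2 fun μ hμ ↦ by
    rw [← f.map_smul, show μ • x = 0 from Subtype.ext (mem_torsionBySet.1 hx μ hμ), f.map_zero]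

theorem IsShortAt.exists_forall_apply_smul_eq [m.IsMaximal] {a b : R} (hm : IsShortAt m a b)
    {f : Y →ₗ.[R] M} {y : Y} (hay : a • y ∈ f.domain)
    (hfay : f ⟨a • y, hay⟩ ∈ m • (⊤ : Submodule R M)) (hy : ∀ r : R, r • y ∈ f.domain → r ∈ m) :
    ∃ v : M, ∀ (r : R) (hr : r • b • y ∈ f.domain), f ⟨r • b • y, hr⟩ = r • v := by
  obtain ⟨w, hw⟩ := hm.exists_eq_smul hfay (apply_mem_torsionBySet f (hm.smul_mem_torsionBySet y))
  refine ⟨b • w, fun r hr ↦ ?_⟩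
  have hrm : r ∈ m := ((Ideal.IsMaximal.isPrime ‹_›).mem_or_mem
    (hy (r * b) (by rwa [mul_smul]))).resolve_right hm.right_notMem
  obtain ⟨p, hp⟩ := hm.exists_mul_right_eq r hrm
  have hpa : (⟨r • b • y, hr⟩ : f.domain) = p • ⟨a • y, hay⟩ :=
    Subtype.ext (by simp [smul_smul, mul_comm r b, hp])
  rw [hpa, f.map_smul, hw, smul_smul, smul_smul, ← hp, mul_comm b r]

theorem mul_eq_zero_or_isShortAt_zero [m.IsMaximal] (hpure : IsPure m) {t : R}
    (htS : ∀ μ ∈ m, μ * t ∈ modSocle R R) (n : Ideal R) [hn : n.IsMaximal] {s : R}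
    (hs : s ∈ torsionBySet R R n) :
    t * s = 0 ∨ ∃ b, IsShortAt n 0 b := by
  by_cases hSn : modSocle R R ≤ n
  · left
    by_cases hmn : m ≤ n
    · obtain rfl : m = n := Ideal.IsMaximal.eq_of_le ‹_› hn.ne_top hmn
      obtain ⟨r, hr, hrs⟩ := hpure s (hSn (torsionBySet_le_modSocle m hs))
      rw [show s = 0 from hrs ▸ mem_torsionBySet.1 hs r hr, mul_zero]
    · obtain ⟨μ, hμ, hμn⟩ := SetLike.not_le_iff_exists.1 hmn
      exact mem_torsionBySet.1 hs t ((hn.isPrime.mem_or_mem (hSn (htS μ hμ))).resolve_left hμn)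
  · obtain ⟨s', hs', hs'n⟩ := SetLike.not_le_iff_exists.1 hSn
    exact .inr (isShortAt_zero_of_mem_modSocle hs' hn.isPrime hs'n)

theorem smul_smul_mem_of_isPure [m.IsMaximal] (hpure : IsPure m) {t : R}
    (htS : ∀ μ ∈ m, μ * t ∈ modSocle R R) {K : Submodule R Y}
    (hK : ∀ n : Ideal R, n.IsMaximal → (∃ b, IsShortAt n 0 b) → torsionBySet R Y n ≤ K)
    {s : R} (hs : s ∈ modSocle R R) (y : Y) : t • s • y ∈ K := by
  suffices h : modSocle R R ≤ K.comap (t • LinearMap.toSpanSingleton R Y y) from h hs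
  refine modSocle_le fun n hn s hsn ↦ ?_
  change t • s • y ∈ K
  rcases mul_eq_zero_or_isShortAt_zero hpure htS n hsn with hts | hshort_n
  · rw [smul_smul, hts, zero_smul]
    exact K.zero_mem
  · refine K.smul_mem t (hK n hn hshort_n (mem_torsionBySet.2 fun μ hμ ↦ ?_))
    rw [smul_smul, ← smul_eq_mul, mem_torsionBySet.1 hsn μ hμ, zero_smul]

theorem IsPureOrShortRing.exists_linearMap_extend (hR : IsPureOrShortRing R) (f₀ : Y →ₗ.[R] M)
    (hdom : modSocle R Y ≤ f₀.domain)
    (hf₀ : ∀ m : Ideal R, m.IsMaximal → (∃ a b, IsShortAt m a b) →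
      ∀ x : f₀.domain, (x : Y) ∈ torsionBySet R Y m → f₀ x ∈ m • (⊤ : Submodule R M)) :
    ∃ g : Y →ₗ[R] M, ∀ x : f₀.domain, g x = f₀ x := by
  have := hR.isSemisimpleModule_quotient
  refine exists_linearMap_extend_of_forall_notMem_domain f₀ fun f hff₀ y hy ↦ ?_
  have hf (n : Ideal R) (hn : n.IsMaximal) (hshort : ∃ a b, IsShortAt n a b) (x : f.domain)
      (hx : (x : Y) ∈ torsionBySet R Y n) : f x ∈ n • (⊤ : Submodule R M) := by
    rw [← hff₀.2 (x := ⟨x, hdom (torsionBySet_le_modSocle n hx)⟩) rfl]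
    exact hf₀ n hn hshort _ hx
  obtain ⟨m, hm, hle⟩ := Ideal.exists_le_maximal
    (f.domain.comap (LinearMap.toSpanSingleton R Y y))
    fun h ↦ hy (by simpa using (Ideal.eq_top_iff_one _).1 h)
  obtain ⟨t, htm, htS⟩ := exists_notMem_mul_mem (modSocle R R) hm.ne_top
  have hdiv (r c : R) (hc : c ∉ m) (h : r • c • y ∈ f.domain) : r ∈ m :=
    (hm.isPrime.mem_or_mem (hle (show (r * c) • y ∈ f.domain by rwa [mul_smul]))).resolve_right hc
  have hmt (μ : R) (hμ : μ ∈ m) : μ • t • y ∈ f.domain := by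
    rw [smul_smul]
    exact hff₀.1 (hdom (smul_mem_modSocle (htS μ hμ) y))
  have hnot (b : R) (hb : b ∉ m) : b • t • y ∉ f.domain := fun h ↦ hb (hdiv b t htm h)
  rcases hR.isPure_or_isShortAt m hm with hpure | ⟨a, b, hab⟩
  · have hK (n : Ideal R) (hn : n.IsMaximal) (hb : ∃ b, IsShortAt n 0 b) :
        torsionBySet R Y n ≤ f.toFun.ker.map f.domain.subtype := fun x hx ↦ by
      obtain ⟨b, hb⟩ := hb
      let x' : f.domain := ⟨x, hff₀.1 (hdom (torsionBySet_le_modSocle n hx))⟩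
      obtain ⟨w, hw⟩ := hb.exists_eq_smul (hf n hn ⟨0, b, hb⟩ x' hx) (apply_mem_torsionBySet f hx)
      exact ⟨x', hw.trans (zero_smul R w), rfl⟩
    refine ⟨t • t • y, hnot t htm, 0, fun r hr ↦ ?_⟩
    have hrm : r ∈ m := (hm.isPrime.mem_or_mem
      (hdiv (r * t) t htm (by rwa [mul_smul]))).resolve_right htm
    obtain ⟨x, hx, hxr⟩ := smul_smul_mem_of_isPure hpure htS hK (htS r hrm) y
    have hrx : r • t • t • y = x := by rw [smul_comm r, smul_smul r, ← hxr, subtype_apply]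
    rw [smul_zero, show (⟨r • t • t • y, hr⟩ : f.domain) = x from Subtype.ext hrx]
    exact hx
  · exact ⟨b • t • y, hnot b hab.right_notMem, hab.exists_forall_apply_smul_eq (hmt a hab.left_mem)
      (hf m hm ⟨a, b, hab⟩ _ (hab.smul_mem_torsionBySet _)) fun r ↦ hdiv r t htm⟩

end ExtensionPureOrShort

section AlmostNInjective

/-- The second alternative in almost injectivity, in terms of the range of the idempotent: some
nonzero direct summand `P` of the ambient module, with projection `π`, admits a map `h` from the
target of `f` such that `h ∘ f` is the restriction of `π`. -/
def FactorsProjection {A M N : Type*} [Ring A] [AddCommGroup M] [Module A M] [AddCommGroup N]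
    [Module A N] {X : Submodule A N} (f : X →ₗ[A] M) : Prop :=
  ∃ P : Submodule A N, P ≠ ⊥ ∧ ∃ (h : M →ₗ[A] P) (π : N →ₗ[A] P),
    (∀ p : P, π p = p) ∧ ∀ x : X, h (f x) = π x

theorem almostNInjective_iff {A M N : Type*} [Ring A] [AddCommGroup M] [Module A M]
    [AddCommGroup N] [Module A N] :
    AlmostNInjective A M N ↔ ∀ (X : Submodule A N) (f : X →ₗ[A] M),
      (∃ g : N →ₗ[A] M, ∀ x : X, g x = f x) ∨ FactorsProjection f := by
  refine forall₂_congr fun X f ↦ or_congr_right ⟨?_, ?_⟩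
  · rintro ⟨π, hπ, hne, h, hf⟩
    refine ⟨LinearMap.range π, mt LinearMap.range_eq_bot.1 hne, h, π.rangeRestrict, ?_,
      fun x ↦ Subtype.ext (hf x)⟩
    rintro ⟨_, y, rfl⟩
    exact Subtype.ext (LinearMap.congr_fun hπ y)
  · rintro ⟨P, hP, h, π, hπ, hf⟩
    have hrange : LinearMap.range (P.subtype ∘ₗ π) = P := by
      rw [LinearMap.range_comp, LinearMap.range_eq_top (f := π).2 fun p ↦ ⟨p, hπ p⟩,
        Submodule.map_top, range_subtype]
    refine ⟨P.subtype ∘ₗ π, LinearMap.ext fun x ↦ congrArg Subtype.val (hπ (π x)), ?_,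
      inclusion hrange.ge ∘ₗ h, fun x ↦ congrArg Subtype.val (hf x)⟩
    rwa [← LinearMap.range_eq_bot.ne, hrange]

variable {R : Type*} [CommRing R] {M Y P : Type*} [AddCommGroup M] [Module R M]
  [AddCommGroup Y] [Module R Y] [AddCommGroup P] [Module R P] {m : Ideal R}

instance isSemisimpleModule_quotient_smul_top [m.IsMaximal] :
    IsSemisimpleModule R (M ⧸ m • (⊤ : Submodule R M)) :=
  isSemisimpleModule_of_isTorsionBySet m (Module.isTorsionBySet_quotient_ideal_smul M m)

theorem eq_zero_of_smul_eq_zero [m.IsMaximal] {x : M} (hx : x ∈ torsionBySet R M m) {c : R}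
    (hc : c ∉ m) (hcx : c • x = 0) : x = 0 := by
  obtain ⟨d, μ, hμ, hd⟩ := Ideal.IsMaximal.exists_inv ‹_› hc
  rw [← one_smul R x, ← hd, add_smul, mul_smul, hcx, mem_torsionBySet.1 hx μ hμ, smul_zero,
    add_zero]

theorem mem_of_smul_eq_zero [m.IsMaximal] {x : M} (hx : x ∈ torsionBySet R M m) (hx0 : x ≠ 0)
    {c : R} (hcx : c • x = 0) : c ∈ m := by
  by_contra hc
  exact hx0 (eq_zero_of_smul_eq_zero hx hc hcx)

theorem exists_linearMap_extend_of_eq_zero {A M P : Type*} [Ring A] [AddCommGroup M] [Module A M]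
    [AddCommGroup P] [Module A P] (L : Submodule A M) [IsSemisimpleModule A (M ⧸ L)]
    {X : Submodule A M} (f : X →ₗ[A] P) (hf : ∀ x : X, (x : M) ∈ L → f x = 0) :
    ∃ g : M →ₗ[A] P, (∀ x : X, g x = f x) ∧ ∀ x ∈ L, g x = 0 := by
  obtain ⟨g, hg⟩ := IsSemisimpleModule.extension_property
    ((L.comap X.subtype).mapQ L X.subtype le_rfl)
    (LinearMap.ker_eq_bot.1 (ker_liftQ_eq_bot' _ _ (by simp [LinearMap.ker_comp])))
    ((L.comap X.subtype).liftQ f hf)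
  refine ⟨g ∘ₗ L.mkQ, fun x ↦ LinearMap.congr_fun hg (Submodule.Quotient.mk x), fun x hx ↦ ?_⟩
  simp [(Submodule.Quotient.mk_eq_zero L).2 hx]

theorem exists_linearMap_span_singleton [m.IsMaximal] {z : M} (hz : z ∉ m • (⊤ : Submodule R M))
    {u : Y} (hu : u ∈ torsionBySet R Y m) :
    ∃ h : M →ₗ[R] span R {u}, (h z : Y) = u ∧ ∀ x ∈ m • (⊤ : Submodule R M), h x = 0 := by
  have hmem {c : R} (hc : c • z ∈ m • (⊤ : Submodule R M)) : c ∈ m :=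
    mem_of_smul_eq_zero (m := m) (x := (m • (⊤ : Submodule R M)).mkQ z)
      (mem_torsionBySet.2 fun μ hμ ↦ (Submodule.Quotient.mk_eq_zero _).2
        (smul_mem_smul hμ mem_top))
      (mt (Submodule.Quotient.mk_eq_zero _).1 hz) ((Submodule.Quotient.mk_eq_zero _).2 hc)
  have hmu {c : R} (hc : c ∈ m) : c • (⟨u, mem_span_singleton_self u⟩ : span R {u}) = 0 :=
    Subtype.ext (mem_torsionBySet.1 hu c hc)
  let f : M →ₗ.[R] span R {u} := LinearPMap.mkSpanSingleton' z ⟨u, mem_span_singleton_self u⟩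
    fun c hc ↦ hmu (hmem (hc ▸ zero_mem _))
  obtain ⟨h, hf, hm⟩ := exists_linearMap_extend_of_eq_zero (m • (⊤ : Submodule R M)) f.toFun
    (by
      rintro ⟨x, hx⟩ hxm
      obtain ⟨c, rfl⟩ := mem_span_singleton.1 hx
      exact (LinearPMap.mkSpanSingleton'_apply _ _ _ c hx).trans (hmu (hmem hxm)))
  refine ⟨h, ?_, hm⟩
  rw [hf ⟨z, mem_span_singleton_self z⟩]
  exact congrArg Subtype.val (LinearPMap.mkSpanSingleton'_apply_self _ _ _ _)

end AlmostNInjective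

section AlmostNInjectivePureOrShort

variable {R : Type*} [CommRing R] {M Y : Type*} [AddCommGroup M] [Module R M]
  [AddCommGroup Y] [Module R Y] {m : Ideal R} {X : Submodule R Y} {f : X →ₗ[R] M}

theorem exists_notMem_smul_mem_torsionBySet (hm : m.IsMaximal)
    (h : IsPure m ∨ ∃ a b, IsShortAt m a b) {y : Y} (hy : y ∈ m • (⊤ : Submodule R Y)) :
    ∃ c ∉ m, c • y ∈ torsionBySet R Y m := by
  rcases h with hpure | ⟨a, b, hab⟩
  · obtain ⟨r, hr, hry⟩ := hpure.exists_smul_eq hy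
    refine ⟨1 - r, one_sub_notMem hm.ne_top hr, ?_⟩
    rw [sub_smul, one_smul, hry, sub_self]
    exact zero_mem _
  · obtain ⟨w, hw⟩ := hab.exists_smul_eq_smul hy
    exact ⟨b, hab.right_notMem, hw ▸ hab.smul_mem_torsionBySet w⟩

theorem span_singleton_le_torsionBySet {u : Y} (hu : u ∈ torsionBySet R Y m) (p : span R {u}) :
    (p : Y) ∈ torsionBySet R Y m :=
  (span_singleton_le_iff_mem _ _).2 hu p.2

theorem coe_ne_zero_of_apply_notMem {K : Submodule R M} {u : X} (hu : f u ∉ K) : (u : Y) ≠ 0 := by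
  intro hu0
  rw [Submodule.coe_eq_zero.1 hu0, map_zero] at hu
  exact hu (zero_mem K)

theorem factorsProjection_of_notMem_smul_top (hm : m.IsMaximal)
    (h : IsPure m ∨ ∃ a b, IsShortAt m a b) {u : X} (hu : (u : Y) ∈ torsionBySet R Y m)
    (hfu : f u ∉ m • (⊤ : Submodule R M))
    (hf : ∀ x : X, (x : Y) ∈ torsionBySet R Y m → (x : Y) ∈ m • (⊤ : Submodule R Y) →
      f x ∈ m • (⊤ : Submodule R M)) :
    FactorsProjection f := by
  obtain ⟨h, hhu, hh⟩ := exists_linearMap_span_singleton hfu hu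
  obtain ⟨π, hπ, -⟩ := exists_linearMap_extend_of_eq_zero (m • (⊤ : Submodule R Y)) (h ∘ₗ f)
    fun x hx ↦ by
      obtain ⟨c, hc, hcx⟩ := exists_notMem_smul_mem_torsionBySet hm ‹_› hx
      refine Subtype.ext (eq_zero_of_smul_eq_zero (span_singleton_le_torsionBySet hu _) hc ?_)
      have := hh _ (hf (c • x) hcx (smul_mem _ c hx))
      rw [map_smul, map_smul] at this
      exact congrArg Subtype.val this
  refine ⟨span R {(u : Y)}, ?_, h, π, ?_, fun x ↦ (hπ x).symm⟩
  · exact mt span_singleton_eq_bot.1 (coe_ne_zero_of_apply_notMem hfu)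
  · rintro ⟨_, hp⟩
    obtain ⟨c, rfl⟩ := mem_span_singleton.1 hp
    refine Subtype.ext ?_
    simp [hπ, hhu]

theorem IsShortAt.exists_smul_eq_of_mem {a b : R} [m.IsMaximal] (hm : IsShortAt m a b) {u : Y}
    (hu : u ∈ torsionBySet R Y m) (hum : u ∈ m • (⊤ : Submodule R Y)) :
    ∃ y, a • y = u ∧ ∀ z ∈ m, z • y ∈ span R {u} := by
  obtain ⟨w, hw⟩ := hm.exists_eq_smul hum hu
  obtain ⟨c, μ, hμ, hc⟩ := Ideal.IsMaximal.exists_inv ‹_› hm.right_notMem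
  refine ⟨(c * b) • w, ?_, fun z hz ↦ ?_⟩
  · rw [smul_comm, ← hw, eq_sub_of_add_eq hc, sub_smul, mem_torsionBySet.1 hu μ hμ, one_smul,
      sub_zero]
  · obtain ⟨r, hr⟩ := hm.exists_mul_right_eq z hz
    refine mem_span_singleton.2 ⟨c * r, ?_⟩
    rw [hw, smul_smul, smul_smul, mul_assoc, ← hr]
    congr 1
    ring

theorem exists_smul_projection_of_apply_eq [m.IsMaximal] {a : R} {u y : Y}
    (hu : u ∈ torsionBySet R Y m) (hu0 : u ≠ 0) (hay : a • y = u)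
    (hmy : ∀ z ∈ m, z • y ∈ span R {u}) {π : Y →ₗ[R] span R {y}} (hπ : (π u : Y) = u) :
    ∃ c : R, 1 - c ∈ m ∧ ∀ p : span R {y}, c • π p = p := by
  obtain ⟨w, hw⟩ := mem_span_singleton.1 (π y).2
  have hwu : w • u = u := by
    rw [← hay, smul_comm, hw, ← coe_smul, ← map_smul, hay, hπ]
  have hwm : 1 - w ∈ m := mem_of_smul_eq_zero hu hu0 (by rw [sub_smul, hwu, one_smul, sub_self])
  refine ⟨1 + (1 - w), by simpa [← sub_sub] using m.neg_mem hwm, ?_⟩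
  rintro ⟨_, hp⟩
  obtain ⟨r, rfl⟩ := mem_span_singleton.1 hp
  have hsq : (1 - w) • (1 - w) • y = 0 := by
    obtain ⟨d, hd⟩ := mem_span_singleton.1 (hmy _ hwm)
    rw [← hd, smul_comm, mem_torsionBySet.1 hu _ hwm, smul_zero]
  refine Subtype.ext ?_
  calc (((1 + (1 - w)) • π (r • y) : span R {y}) : Y) = (1 + (1 - w)) • r • w • y := by
        rw [map_smul, coe_smul, coe_smul, hw]
    _ = r • y - r • (1 - w) • (1 - w) • y := by module
    _ = r • y := by rw [hsq, smul_zero, sub_zero]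

theorem IsShortAt.inclusion_mem_smul_top [m.IsMaximal] {a b : R} (hm : IsShortAt m a b) {u y : Y}
    (hu : u ∈ torsionBySet R Y m) (hay : a • y = u) (hle : span R {u} ≤ span R {y})
    {n : Ideal R} (hn : n.IsMaximal) {p : span R {u}} (hp : (p : Y) ∈ torsionBySet R Y n) :
    inclusion hle p ∈ n • (⊤ : Submodule R (span R {y})) := by
  by_cases hnm : n ≤ m
  · obtain rfl := hn.eq_of_le (Ideal.IsMaximal.ne_top ‹_›) hnm
    obtain ⟨r, hr⟩ := mem_span_singleton.1 p.2
    have hpa : inclusion hle p = a • r • ⟨y, mem_span_singleton_self y⟩ :=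
      Subtype.ext (by rw [coe_inclusion, ← hr, ← hay, smul_comm]; rfl)
    exact hpa ▸ smul_mem_smul hm.left_mem mem_top
  · obtain ⟨c, hcn, hcm⟩ := SetLike.not_le_iff_exists.1 hnm
    have hp0 : p = 0 := Subtype.ext <| eq_zero_of_smul_eq_zero
      (span_singleton_le_torsionBySet hu p) hcm (mem_torsionBySet.1 hp c hcn)
    rw [hp0, map_zero]
    exact zero_mem _

theorem IsShortAt.factorsProjection_of_mem_smul_top (hR : IsPureOrShortRing R) (hm : m.IsMaximal)
    {a b : R} (hab : IsShortAt m a b) (hX : modSocle R Y ≤ X) {u : X}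
    (hu : (u : Y) ∈ torsionBySet R Y m) (hum : (u : Y) ∈ m • (⊤ : Submodule R Y))
    (hfu : f u ∉ m • (⊤ : Submodule R M)) : FactorsProjection f := by
  have hu0 : (u : Y) ≠ 0 := coe_ne_zero_of_apply_notMem hfu
  obtain ⟨h, hhu, -⟩ := exists_linearMap_span_singleton hfu hu
  obtain ⟨y, hay, hmy⟩ := hab.exists_smul_eq_of_mem hu hum
  have hle : span R {(u : Y)} ≤ span R {y} :=
    (span_singleton_le_iff_mem _ _).2 (hay ▸ smul_mem _ a (mem_span_singleton_self y))
  obtain ⟨π, hπ⟩ := hR.exists_linearMap_extend ⟨X, inclusion hle ∘ₗ h ∘ₗ f⟩ hX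
    fun n hn _ x hx ↦ hab.inclusion_mem_smul_top hu hay hle hn
      (apply_mem_torsionBySet ⟨X, (span R {(u : Y)}).subtype ∘ₗ h ∘ₗ f⟩ hx)
  replace hπ (x : X) : π x = inclusion hle (h (f x)) := hπ x
  obtain ⟨c, hcm, hc⟩ := exists_smul_projection_of_apply_eq hu hu0 hay hmy
    (π := π) (by rw [hπ, coe_inclusion, hhu])
  refine ⟨span R {y}, ne_bot_of_le_ne_bot (mt span_singleton_eq_bot.1 hu0) hle,
    inclusion hle ∘ₗ h, c • π, hc, fun x ↦ ?_⟩
  have hcx : (1 - c) • inclusion hle (h (f x)) = 0 :=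
    Subtype.ext (mem_torsionBySet.1 (span_singleton_le_torsionBySet hu (h (f x))) _ hcm)
  rw [sub_smul, one_smul, sub_eq_zero] at hcx
  rw [LinearMap.comp_apply, LinearMap.smul_apply, hπ, ← hcx]

theorem IsPureOrShortRing.exists_extend_or_factorsProjection (hR : IsPureOrShortRing R)
    (hX : modSocle R Y ≤ X) (f : X →ₗ[R] M) :
    (∃ g : Y →ₗ[R] M, ∀ x : X, g x = f x) ∨ FactorsProjection f := by
  rw [or_iff_not_imp_left]
  intro hext
  obtain ⟨m, hm, u, hu, hfu⟩ : ∃ m : Ideal R, m.IsMaximal ∧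
      ∃ u : X, (u : Y) ∈ torsionBySet R Y m ∧ f u ∉ m • (⊤ : Submodule R M) := by
    contrapose! hext
    exact hR.exists_linearMap_extend ⟨X, f⟩ hX fun m hm _ ↦ hext m hm
  by_cases hdiv : ∀ x : X, (x : Y) ∈ torsionBySet R Y m → (x : Y) ∈ m • (⊤ : Submodule R Y) →
      f x ∈ m • (⊤ : Submodule R M)
  · exact factorsProjection_of_notMem_smul_top hm (hR.isPure_or_isShortAt m hm) hu hfu hdiv
  push Not at hdiv
  obtain ⟨v, hv, hvm, hfv⟩ := hdiv
  rcases hR.isPure_or_isShortAt m hm with hpure | ⟨a, b, hab⟩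
  · obtain ⟨r, hr, hrv⟩ := hpure.exists_smul_eq hvm
    exact absurd (hrv ▸ mem_torsionBySet.1 hv r hr) (coe_ne_zero_of_apply_notMem hfv)
  · exact hab.factorsProjection_of_mem_smul_top hR hm hX hv hvm hfv

theorem IsPureOrShortRing.almostNInjective (hR : IsPureOrShortRing R) : AlmostNInjective R M Y := by
  refine almostNInjective_iff.2 fun X₀ f₀ ↦ ?_
  obtain ⟨⟨X, f⟩, hle, hX⟩ := exists_linearPMap_modSocle_le_domain ⟨X₀, f₀⟩
  have hf (x : X₀) : f₀ x = f (inclusion hle.1 x) := hle.2 rfl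
  refine (hR.exists_extend_or_factorsProjection hX f).imp ?_ ?_
  · rintro ⟨g, hg⟩
    exact ⟨g, fun x ↦ (hg (inclusion hle.1 x)).trans (hf x).symm⟩
  · rintro ⟨P, hP, h, π, hπ, hfπ⟩
    exact ⟨P, hP, h, π, hπ, fun x ↦ (congrArg h (hf x)).trans (hfπ (inclusion hle.1 x))⟩

end AlmostNInjectivePureOrShort

section RelInjectiveQuotient

variable {R : Type*} [CommRing R] {M Y : Type*} [AddCommGroup M] [Module R M]
  [AddCommGroup Y] [Module R Y] {m : Ideal R}

theorem torsionBySet_inf_smul_top_le_jacobson (m : Ideal R) :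
    torsionBySet R M m ⊓ m • (⊤ : Submodule R M) ≤ Module.jacobson R M := by
  refine le_sInf fun K hK ↦ ?_
  have : IsSimpleModule R (M ⧸ K) := isSimpleModule_iff_isCoatom.2 hK
  have hmax : (Module.annihilator R (M ⧸ K)).IsMaximal := IsSimpleModule.annihilator_isMaximal
  have hann {c : R} (hc : c ∈ Module.annihilator R (M ⧸ K)) (y : M) : c • y ∈ K :=
    (Submodule.Quotient.mk_eq_zero K).1 (Module.mem_annihilator.1 hc (K.mkQ y))
  by_cases hle : m ≤ Module.annihilator R (M ⧸ K)
  · exact inf_le_right.trans (smul_le.2 fun c hc y _ ↦ hann (hle hc) y)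
  · obtain ⟨c, hcm, hc⟩ := SetLike.not_le_iff_exists.1 hle
    refine inf_le_left.trans fun x hx ↦ (Submodule.Quotient.mk_eq_zero K).1 ?_
    refine eq_zero_of_smul_eq_zero (m := Module.annihilator R (M ⧸ K))
      (mem_torsionBySet.2 fun d hd ↦ Module.mem_annihilator.1 hd _) hc ?_
    rw [← Submodule.Quotient.mk_smul, mem_torsionBySet.1 hx c hcm, Submodule.Quotient.mk_zero]

theorem jacobson_le_smul_top (m : Ideal R) [m.IsMaximal] :
    Module.jacobson R M ≤ m • (⊤ : Submodule R M) :=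
  Module.jacobson_le_of_eq_bot (IsSemisimpleModule.jacobson_eq_bot R _)

/-- A submodule that, at each maximal ideal `m`, picks out of the `m`-torsion of `M` a complement of
the part divisible by `m`. -/
def IsTorsionComplement (N : Submodule R M) : Prop :=
  ∀ m : Ideal R, m.IsMaximal → Disjoint N (torsionBySet R M m ⊓ m • (⊤ : Submodule R M)) ∧
    torsionBySet R M m ≤ N ⊔ m • (⊤ : Submodule R M)

variable (R M) in
theorem exists_isTorsionComplement :
    ∃ N : Submodule R M, IsSemisimpleModule R N ∧ IsTorsionComplement N := by
  obtain ⟨N, hN⟩ := exists_isCompl ((Module.jacobson R M).comap (modSocle R M).subtype)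
  refine ⟨N.map (modSocle R M).subtype, .congr (N.equivMapOfInjective _ (subtype_injective _)).symm,
    fun m hm ↦ ⟨?_, ?_⟩⟩
  · refine Disjoint.mono_right (torsionBySet_inf_smul_top_le_jacobson m) (disjoint_def.2 ?_)
    rintro _ ⟨x, hx, rfl⟩ hx'
    rw [disjoint_def.1 hN.disjoint x hx' hx, map_zero]
  · intro x hx
    obtain ⟨κ, hκ, ν, hν, h⟩ := mem_sup.1
      (hN.sup_eq_top ▸ mem_top (x := (⟨x, torsionBySet_le_modSocle m hx⟩ : modSocle R M)))
    rw [sup_comm]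
    exact mem_sup.2 ⟨κ, jacobson_le_smul_top m hκ, ν, mem_map_of_mem hν, congrArg Subtype.val h⟩

theorem IsShortAt.mem_smul_top_of_mem_torsionBySet [hmax : m.IsMaximal] {a b : R}
    (hm : IsShortAt m a b) {N : Submodule R M} (hN : IsTorsionComplement N) {q : M ⧸ N}
    (hq : q ∈ torsionBySet R (M ⧸ N) m) : q ∈ m • (⊤ : Submodule R (M ⧸ N)) := by
  obtain ⟨hdisj, hle⟩ := hN m hmax
  obtain ⟨z, rfl⟩ := N.mkQ_surjective q
  have haz : a • z = 0 := disjoint_def.1 hdisj _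
    ((Submodule.Quotient.mk_eq_zero N).1 (mem_torsionBySet.1 hq a hm.left_mem))
    ⟨hm.smul_mem_torsionBySet z, smul_mem_smul hm.left_mem mem_top⟩
  have hbz : b • z ∈ torsionBySet R M m := mem_torsionBySet.2 fun μ hμ ↦ by
    obtain ⟨r, hr⟩ := hm.exists_mul_right_eq μ hμ
    rw [smul_smul, mul_comm, hr, mul_smul, haz, smul_zero]
  have hsup : N ⊔ m • (⊤ : Submodule R M) ≤ (m • (⊤ : Submodule R (M ⧸ N))).comap N.mkQ :=
    sup_le (N.ker_mkQ.ge.trans (comap_mono bot_le))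
      (map_le_iff_le_comap.1 (map_smul'' m ⊤ N.mkQ ▸ smul_mono_right m le_top))
  have hbq : b • N.mkQ z ∈ m • (⊤ : Submodule R (M ⧸ N)) := by
    simpa only [map_smul, mem_comap] using hsup (hle hbz)
  obtain ⟨c, μ, hμ, hc⟩ := Ideal.IsMaximal.exists_inv hmax hm.right_notMem
  rw [← one_smul R (N.mkQ z), ← hc, add_smul, mul_smul]
  exact add_mem (smul_mem _ c hbq) (smul_mem_smul hμ mem_top)

theorem IsPureOrShortRing.relInjective_quotient (hR : IsPureOrShortRing R) {N : Submodule R M}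
    (hN : IsTorsionComplement N) : RelInjective R Y (M ⧸ N) := by
  intro K f
  obtain ⟨f', hle, hdom⟩ := exists_linearPMap_modSocle_le_domain ⟨K, f⟩
  obtain ⟨g, hg⟩ := hR.exists_linearMap_extend f' hdom fun m hm ⟨_, _, hab⟩ x hx ↦
    hab.mem_smul_top_of_mem_torsionBySet hN (apply_mem_torsionBySet f' hx)
  exact ⟨g, fun x ↦ (hg (inclusion hle.1 x)).trans (hle.2 rfl).symm⟩

end RelInjectiveQuotient

section Semisimplicity

variable {R : Type*} [CommRing R]

theorem isSemisimpleModule_quotient_of_exists {A Y : Type*} [Ring A] [AddCommGroup Y] [Module A Y]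
    (K : Submodule A Y) (h : ∀ T : Submodule A (Y ⧸ K), ∃ g : Y →ₗ[A] T,
      ∀ y, K.mkQ y ∈ T → (g y : Y ⧸ K) = K.mkQ y) : IsSemisimpleModule A (Y ⧸ K) := by
  refine (isSemisimpleModule_iff A _).2 ⟨fun T ↦ ?_⟩
  obtain ⟨g, hg⟩ := h T
  have hK : K ≤ LinearMap.ker g := fun y hy ↦ by
    have hy0 : K.mkQ y = 0 := (Submodule.Quotient.mk_eq_zero K).2 hy
    exact Subtype.ext ((hg y (hy0 ▸ T.zero_mem)).trans hy0)
  refine ⟨_, LinearMap.isCompl_of_proj (f := K.liftQ g hK) fun ⟨t, ht⟩ ↦ Subtype.ext ?_⟩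
  obtain ⟨y, rfl⟩ := K.mkQ_surjective t
  exact hg y ht

theorem exists_mem_torsionBySet_of_not_isPure [IsSemisimpleModule R (R ⧸ modSocle R R)]
    {m : Ideal R} [hmax : m.IsMaximal] (hm : ¬IsPure m) :
    ∃ a ∈ m, a ≠ 0 ∧ a ∈ torsionBySet R R m := by
  simp only [IsPure, not_forall, not_exists, not_and] at hm
  obtain ⟨x, hx, hne⟩ := hm
  obtain ⟨t, ht, htm⟩ := exists_notMem_mul_mem (modSocle R R) hmax.ne_top
  obtain ⟨z, hz, h⟩ := exists_one_sub_smul_mem_torsionBySet_of_mem_modSocle m (htm x hx)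
  refine ⟨_, m.mul_mem_left _ (m.mul_mem_right t hx), fun h0 ↦ ?_, h⟩
  obtain ⟨d, μ, hμ, hd⟩ :=
    hmax.exists_inv (hmax.isPrime.mul_notMem (one_sub_notMem hmax.ne_top hz) ht)
  refine hne μ hμ ?_
  linear_combination x * hd - d * h0

end Semisimplicity

section EssentialSocle

variable {R : Type*} [CommRing R]

theorem isEssentialSubmodule_iff {A M : Type*} [Ring A] [AddCommGroup M] [Module A M]
    {K : Submodule A M} :
    IsEssentialSubmodule A K ↔ ∀ x : M, x ≠ 0 → ∃ r : A, r • x ∈ K ∧ r • x ≠ 0 := by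
  refine ⟨fun hK x hx ↦ ?_, fun h J hJ hKJ ↦ ?_⟩
  · obtain ⟨y, ⟨hyK, hyx⟩, hy⟩ := exists_mem_ne_zero_of_ne_bot
      (hK (span A {x}) (mt span_singleton_eq_bot.1 hx))
    obtain ⟨r, rfl⟩ := mem_span_singleton.1 hyx
    exact ⟨r, hyK, hy⟩
  · obtain ⟨x, hxJ, hx⟩ := exists_mem_ne_zero_of_ne_bot hJ
    obtain ⟨r, hrK, hr⟩ := h x hx
    exact hr ((Submodule.mem_bot A).1 (hKJ ▸ ⟨hrK, J.smul_mem r hxJ⟩))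

theorem isEssentialSubmodule_of_torsionBySet_eq_bot {m : Ideal R}
    (hm : torsionBySet R R m = ⊥) : IsEssentialSubmodule R m := by
  refine isEssentialSubmodule_iff.2 fun x hx ↦ ?_
  contrapose! hx
  exact (Submodule.mem_bot R).1
    (hm ▸ mem_torsionBySet.2 fun μ hμ ↦ hx μ (m.mul_mem_right x hμ))

theorem isReduced_of_modSocle_eq_bot
    (hess : ∀ K : Ideal R, IsEssentialSubmodule R K → IsSemisimpleModule R (R ⧸ K))
    (hsoc : modSocle R R = ⊥) : IsReduced R := by
  refine isReduced_iff_pow_one_lt 2 one_lt_two |>.2 fun a ha ↦ ?_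
  have hann : IsEssentialSubmodule R (Ideal.torsionOf R R a) :=
    isEssentialSubmodule_iff.2 fun x hx ↦ by
      by_cases hxa : x * a = 0
      · exact ⟨1, by simpa [Ideal.mem_torsionOf_iff] using hxa, by rwa [one_smul]⟩
      · refine ⟨a, ?_, by rwa [smul_eq_mul, mul_comm]⟩
        rw [Ideal.mem_torsionOf_iff, smul_eq_mul, smul_eq_mul]
        linear_combination x * ha
  have := hess _ hann
  have := IsSemisimpleModule.congr (Ideal.quotTorsionOfEquivSpanSingleton R R a).symm
  exact (Submodule.mem_bot R).1 (hsoc ▸ le_modSocle (span R {a}) (mem_span_singleton_self a))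

theorem exists_mul_mul_self_eq [IsReduced R]
    (hess : ∀ K : Ideal R, IsEssentialSubmodule R K → IsSemisimpleModule R (R ⧸ K)) (a : R) :
    ∃ y, y * (a * a) = a := by
  have hK : IsEssentialSubmodule R (Ideal.span {a * a} ⊔ Ideal.torsionOf R R a) := by
    refine isEssentialSubmodule_iff.2 fun x hx ↦ ?_
    by_cases hxa : a * a * x = 0
    · have hxa' : x * a = 0 := eq_zero_of_pow_eq_zero (n := 2) (by linear_combination x * hxa)
      exact ⟨1, mem_sup_right (by simpa [Ideal.mem_torsionOf_iff] using hxa'), by rwa [one_smul]⟩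
    · exact ⟨a * a, mem_sup_left (Ideal.mul_mem_right _ _ (Ideal.mem_span_singleton_self _)), hxa⟩
  have := hess _ hK
  obtain ⟨z, hz, h⟩ := exists_one_sub_smul_mem_torsionBySet (Ideal.span {a})
    (mkQ (Ideal.span {a * a} ⊔ Ideal.torsionOf R R a) 1)
  obtain ⟨r, rfl⟩ := Ideal.mem_span_singleton'.1 hz
  have ha := mem_torsionBySet.1 h a (Ideal.mem_span_singleton_self a)
  rw [← map_smul, ← map_smul, mkQ_apply, Submodule.Quotient.mk_eq_zero] at ha
  obtain ⟨c, hc, n, hna, hcn⟩ := mem_sup.1 ha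
  obtain ⟨q, rfl⟩ := Ideal.mem_span_singleton'.1 hc
  rw [Ideal.mem_torsionOf_iff, smul_eq_mul] at hna
  simp only [smul_eq_mul] at hcn
  have hn : n ^ 2 = 0 := by linear_combination (1 - (r + q) * a) * hna + n * hcn
  exact ⟨r + q, by linear_combination hcn - eq_zero_of_pow_eq_zero hn⟩

end EssentialSocle

section NonzeroSocle

variable {R : Type*} [CommRing R]

theorem exists_isIdempotentElem_mem (hreg : ∀ a : R, ∃ y, y * (a * a) = a) {m : Ideal R}
    (hm : IsEssentialSubmodule R m) {y : R} (hy : y ≠ 0) :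
    ∃ e ∈ m, IsIdempotentElem e ∧ e ≠ 0 ∧ ∃ c, e = c * y := by
  obtain ⟨r, hrm, hr⟩ := isEssentialSubmodule_iff.1 hm y hy
  rw [smul_eq_mul] at hrm hr
  obtain ⟨w, hw⟩ := hreg (r * y)
  refine ⟨w * (r * y), m.mul_mem_left w hrm, ?_, fun h0 ↦ hr ?_, w * r, (mul_assoc _ _ _).symm⟩
  · rw [IsIdempotentElem]
    linear_combination w * hw
  · linear_combination r * y * h0 - hw

theorem exists_orthogonal_idempotents (hreg : ∀ a : R, ∃ y, y * (a * a) = a) {m : Ideal R}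
    (hm : IsEssentialSubmodule R m) :
    ∃ E ⊆ (m : Set R), (∀ e ∈ E, IsIdempotentElem e ∧ e ≠ 0) ∧ E.Pairwise (· * · = 0) ∧
      ∀ y ≠ 0, ∃ e ∈ E, e * y ≠ 0 := by
  obtain ⟨E, hE⟩ := zorn_subset
    {E : Set R | E ⊆ m ∧ (∀ e ∈ E, IsIdempotentElem e ∧ e ≠ 0) ∧ E.Pairwise (· * · = 0)}
    fun C hC hchain ↦ ⟨⋃₀ C, ⟨Set.sUnion_subset fun E hE ↦ (hC hE).1,
      fun e ⟨E, hE, he⟩ ↦ (hC hE).2.1 e he,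
      (Set.pairwise_sUnion hchain.directedOn).2 fun E hE ↦ (hC hE).2.2⟩,
      fun E hE ↦ Set.subset_sUnion_of_mem hE⟩
  obtain ⟨hEm, hidem, hpair⟩ := hE.prop
  refine ⟨E, hEm, hidem, hpair, fun y hy ↦ ?_⟩
  by_contra! hEy
  obtain ⟨f, hfm, hf, hf0, c, rfl⟩ := exists_isIdempotentElem_mem hreg hm hy
  have horth : ∀ e ∈ E, e * (c * y) = 0 := fun e he ↦ by
    rw [mul_left_comm, hEy e he, mul_zero]
  have hmem : c * y ∈ E := hE.mem_of_prop_insert ⟨Set.insert_subset hfm hEm,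
    Set.forall_mem_insert.2 ⟨⟨hf, hf0⟩, hidem⟩,
    hpair.insert fun e he _ ↦ ⟨(mul_comm _ _).trans (horth e he), horth e he⟩⟩
  exact hf0 (hf.symm.trans (horth _ hmem))

theorem exists_isMaximal_notMem {e : R} (he : IsIdempotentElem e) (he0 : e ≠ 0) :
    ∃ n : Ideal R, n.IsMaximal ∧ e ∉ n := by
  have hunit : ¬IsUnit (1 - e) := fun h ↦ he0 (h.mul_right_eq_zero.1 he.one_sub_mul_self)
  obtain ⟨n, hn, hen⟩ := exists_max_ideal_of_mem_nonunits hunit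
  exact ⟨n, hn, sub_sub_cancel 1 e ▸ one_sub_notMem hn.ne_top hen⟩

theorem isEssentialSubmodule_iInf {E : Set R} (hpair : E.Pairwise (· * · = 0))
    (hE : ∀ y ≠ 0, ∃ e ∈ E, e * y ≠ 0) (n : E → Ideal R) (hprime : ∀ e, (n e).IsPrime)
    (hess : ∀ e, IsEssentialSubmodule R (n e)) (hn : ∀ e : E, (e : R) ∉ n e) :
    IsEssentialSubmodule R (⨅ e, n e) := by
  refine isEssentialSubmodule_iff.2 fun y hy ↦ ?_
  obtain ⟨e, he, hey⟩ := hE y hy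
  obtain ⟨r, hr, hr0⟩ := isEssentialSubmodule_iff.1 (hess ⟨e, he⟩) _ hey
  refine ⟨r * e, (mem_iInf _).2 fun f ↦ ?_, by rwa [mul_smul]⟩
  obtain rfl | hef := eq_or_ne ⟨e, he⟩ f
  · rwa [mul_smul]
  · refine ((hprime f).mem_or_mem (y := (f : R)) ?_).resolve_right (hn f)
    have h0 : e * f = 0 := hpair he f.2 fun h ↦ hef (Subtype.ext h)
    rw [smul_eq_mul, show r * e * y * f = 0 by linear_combination r * y * h0]
    exact zero_mem _

/-- Each element of the ideal generated by `E` involves only finitely many members of `E`, which are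
annihilated simultaneously by a product of elements `1 - e`, `e ∈ E`. -/
theorem exists_notMem_forall_mul_eq_zero {E : Set R} {m : Ideal R} [hm : m.IsPrime]
    (hEm : E ⊆ m) (hidem : ∀ e ∈ E, IsIdempotentElem e) (hpair : E.Pairwise (· * · = 0)) {z : R}
    (hz : z ∈ Ideal.span E) : ∃ q ∉ m, ∀ e ∈ E, e * q ≠ 0 → e * z = 0 := by
  induction hz using Submodule.span_induction with
  | mem z hz =>
    refine ⟨1 - z, one_sub_notMem hm.ne_top (hEm hz), fun e he heq ↦ hpair he hz ?_⟩
    rintro rfl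
    exact heq (hidem e he).mul_one_sub_self
  | zero => exact ⟨1, (Ideal.ne_top_iff_one m).1 hm.ne_top, fun e _ _ ↦ mul_zero e⟩
  | add y z _ _ hy hz =>
    obtain ⟨q, hq, hqy⟩ := hy
    obtain ⟨q', hq', hqz⟩ := hz
    refine ⟨q * q', hm.mul_notMem hq hq', fun e he heq ↦ ?_⟩
    rw [mul_add, hqy e he fun h ↦ heq (by rw [← mul_assoc, h, zero_mul]),
      hqz e he fun h ↦ heq (by rw [mul_left_comm, h, mul_zero]), add_zero]
  | smul r z _ hz =>
    obtain ⟨q, hq, hqz⟩ := hz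
    exact ⟨q, hq, fun e he heq ↦ by rw [smul_eq_mul, mul_left_comm, hqz e he heq, mul_zero]⟩

theorem modSocle_ne_bot [Nontrivial R]
    (hess : ∀ K : Ideal R, IsEssentialSubmodule R K → IsSemisimpleModule R (R ⧸ K)) :
    modSocle R R ≠ ⊥ := by
  intro hsoc
  have hmax (n : Ideal R) (hn : n.IsMaximal) : IsEssentialSubmodule R n :=
    isEssentialSubmodule_of_torsionBySet_eq_bot (eq_bot_iff.2 (hsoc ▸ torsionBySet_le_modSocle n))
  have := isReduced_of_modSocle_eq_bot hess hsoc
  obtain ⟨m, hm⟩ := Ideal.exists_maximal R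
  obtain ⟨E, hEm, hidem, hpair, hE⟩ :=
    exists_orthogonal_idempotents (exists_mul_mul_self_eq hess) (hmax m hm)
  choose n hnmax hn using fun e : E ↦ exists_isMaximal_notMem (hidem e e.2).1 (hidem e e.2).2
  have := hess _ (isEssentialSubmodule_iInf hpair hE n (fun e ↦ (hnmax e).isPrime)
    (fun e ↦ hmax _ (hnmax e)) hn)
  obtain ⟨z, hz, h⟩ := exists_one_sub_smul_mem_torsionBySet (Ideal.span E) ((⨅ e, n e).mkQ 1)
  obtain ⟨q, hq, hqz⟩ := exists_notMem_forall_mul_eq_zero hEm (fun e he ↦ (hidem e he).1) hpair hz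
  obtain ⟨e, he, heq⟩ := hE q fun h ↦ hq (h ▸ m.zero_mem)
  have hez := mem_torsionBySet.1 h e (Ideal.subset_span he)
  rw [← map_smul, ← map_smul, mkQ_apply, Submodule.Quotient.mk_eq_zero] at hez
  refine hn ⟨e, he⟩ ?_
  convert (mem_iInf _).1 hez ⟨e, he⟩ using 1
  simp only [smul_eq_mul]
  linear_combination hqz e he heq

end NonzeroSocle

section Transfer

variable {R : Type*} {S : Type*} [CommRing R] [CommRing S] [Algebra R S] {M Y : Type*}
  [AddCommGroup M] [Module R M] [Module S M] [IsScalarTower R S M]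
  [AddCommGroup Y] [Module R Y] [Module S Y] [IsScalarTower R S Y]

theorem exists_restrictScalars_eq (hS : Function.Surjective (algebraMap R S))
    (K : Submodule R M) : ∃ K' : Submodule S M, K'.restrictScalars R = K :=
  ⟨{ K with
      smul_mem' := hS.forall.2 fun r x hx ↦ (algebraMap_smul S r x).symm ▸ K.smul_mem r hx }, rfl⟩

theorem isSemisimpleModule_iff_of_surjective (hS : Function.Surjective (algebraMap R S)) :
    IsSemisimpleModule R M ↔ IsSemisimpleModule S M := by
  have : RingHomSurjective (algebraMap R S) := ⟨hS⟩
  let e : M →ₛₗ[algebraMap R S] M :=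
    { AddMonoidHom.id M with map_smul' := fun r x ↦ (algebraMap_smul S r x).symm }
  exact e.isSemisimpleModule_iff_of_bijective Function.bijective_id

theorem relInjective_iff_of_surjective (hS : Function.Surjective (algebraMap R S)) :
    RelInjective R Y M ↔ RelInjective S Y M := by
  refine ⟨fun h K f ↦ ?_, fun h K f ↦ ?_⟩
  · obtain ⟨g, hg⟩ := h (K.restrictScalars R) (f.restrictScalars R)
    exact ⟨g.extendScalarsOfSurjective hS, hg⟩
  · obtain ⟨K, rfl⟩ := exists_restrictScalars_eq hS K
    obtain ⟨g, hg⟩ := h K ((show K →ₗ[R] M from f).extendScalarsOfSurjective hS)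
    exact ⟨g.restrictScalars R, hg⟩

theorem almostNInjective_iff_of_surjective (hS : Function.Surjective (algebraMap R S)) :
    AlmostNInjective R M Y ↔ AlmostNInjective S M Y := by
  simp only [almostNInjective_iff]
  refine ⟨fun h X f ↦ ?_, fun h X f ↦ ?_⟩
  · obtain ⟨g, hg⟩ | ⟨P, hP, k, π, hπ, hk⟩ := h (X.restrictScalars R) (f.restrictScalars R)
    · exact Or.inl ⟨g.extendScalarsOfSurjective hS, hg⟩
    · obtain ⟨P, rfl⟩ := exists_restrictScalars_eq hS P
      exact Or.inr ⟨P, by simpa using hP, (show M →ₗ[R] P from k).extendScalarsOfSurjective hS,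
        (show Y →ₗ[R] P from π).extendScalarsOfSurjective hS, hπ, hk⟩
  · obtain ⟨X, rfl⟩ := exists_restrictScalars_eq hS X
    obtain ⟨g, hg⟩ | ⟨P, hP, k, π, hπ, hk⟩ :=
      h X ((show X →ₗ[R] M from f).extendScalarsOfSurjective hS)
    · exact Or.inl ⟨g.restrictScalars R, hg⟩
    · exact Or.inr ⟨P.restrictScalars R, by simpa using hP, k.restrictScalars R,
        π.restrictScalars R, hπ, hk⟩

theorem relInjective_of_equiv {A U V W : Type*} [Ring A] [AddCommGroup U] [Module A U]
    [AddCommGroup V] [Module A V] [AddCommGroup W] [Module A W] (e : U ≃ₗ[A] V)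
    (h : RelInjective A W U) : RelInjective A W V := by
  intro K f
  obtain ⟨g, hg⟩ := h K (e.symm ∘ₗ f)
  exact ⟨e ∘ₗ g, fun x ↦ by simp [hg]⟩

theorem relInjective_quotient_restrictScalars_iff (hS : Function.Surjective (algebraMap R S))
    {N : Submodule S M} :
    RelInjective R Y (M ⧸ N.restrictScalars R) ↔ RelInjective S Y (M ⧸ N) := by
  rw [← relInjective_iff_of_surjective hS]
  exact ⟨relInjective_of_equiv (Submodule.Quotient.restrictScalarsEquiv R N),
    relInjective_of_equiv (Submodule.Quotient.restrictScalarsEquiv R N).symm⟩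

theorem isTorsionComplement_of_restrictScalars (hS : Function.Surjective (algebraMap R S))
    {N : Submodule S M} (hN : IsTorsionComplement (N.restrictScalars R)) :
    IsTorsionComplement N := by
  intro m hm
  have htors : torsionBySet R M (m.comap (algebraMap R S)) =
      (torsionBySet S M m).restrictScalars R := by
    ext x
    simp only [mem_torsionBySet, restrictScalars_mem, SetLike.mem_coe, hS.forall, Ideal.mem_comap,
      algebraMap_smul]
  have hsmul : m.comap (algebraMap R S) • (⊤ : Submodule R M) =
      (m • (⊤ : Submodule S M)).restrictScalars R := by
    rw [← restrictScalars_top R S M, ← Ideal.smul_restrictScalars,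
      Ideal.map_comap_of_surjective _ hS]
  have h := hN _ (Ideal.comap_isMaximal_of_surjective (K := m) _ hS)
  rwa [htors, hsmul, ← restrictScalars_inf, ← restrictScalars_sup, disjoint_restrictScalars_iff,
    restrictScalars_le] at h

end Transfer

section SmallScalars

variable {R : Type u} [CommRing R]

theorem exists_module_of_surjective {S : Type*} [CommRing S] [Algebra R S]
    (hS : Function.Surjective (algebraMap R S)) {M : Type*} [AddCommGroup M] [Module R M]
    (h : ∀ r, algebraMap R S r = 0 → ∀ x : M, r • x = 0) :
    ∃ _ : Module S M, IsScalarTower R S M := by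
  let : SMul S M := ⟨fun s x ↦ Function.surjInv hS s • x⟩
  have hsmul (r : R) (x : M) : algebraMap R S r • x = r • x := by
    change Function.surjInv hS (algebraMap R S r) • x = r • x
    rw [← sub_eq_zero, ← sub_smul]
    exact h _ (by rw [map_sub, Function.surjInv_eq hS, sub_self]) x
  let : Module S M := hS.moduleLeft _ hsmul
  exact ⟨inferInstance, .of_algebraMap_smul hsmul⟩

theorem small_quotient_annihilator (W : Type v) [AddCommGroup W] [Module R W] :
    Small.{v} (R ⧸ Module.annihilator R W) :=
  small_of_injective (RingHom.kerLift_injective (Module.toAddMonoidEnd R W))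

theorem exists_small_scalars (M Y : Type v) [AddCommGroup M] [Module R M] [AddCommGroup Y]
    [Module R Y] :
    ∃ (S : Type v) (_ : CommRing S) (_ : Algebra R S), Function.Surjective (algebraMap R S) ∧
      (∃ _ : Module S M, IsScalarTower R S M) ∧ ∃ _ : Module S Y, IsScalarTower R S Y := by
  let I := Module.annihilator R (M × Y)
  have : Small.{v} (R ⧸ I) := small_quotient_annihilator (M × Y)
  have hsurj : Function.Surjective (algebraMap R (Shrink.{v} (R ⧸ I))) :=
    (Shrink.ringEquiv (R ⧸ I)).symm.surjective.comp Ideal.Quotient.mk_surjective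
  have hann (r : R) (hr : algebraMap R (Shrink.{v} (R ⧸ I)) r = 0) (x : M × Y) : r • x = 0 :=
    Module.mem_annihilator.1 (Ideal.Quotient.eq_zero_iff_mem.1
      ((Shrink.ringEquiv (R ⧸ I)).symm.map_eq_zero_iff.1 hr)) x
  exact ⟨Shrink.{v} (R ⧸ I), inferInstance, inferInstance, hsurj,
    exists_module_of_surjective hsurj fun r hr x ↦ congrArg Prod.fst (hann r hr (x, 0)),
    exists_module_of_surjective hsurj fun r hr y ↦ congrArg Prod.snd (hann r hr (0, y))⟩

end SmallScalars

section EveryModuleAlmostInjective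

theorem exists_isShortAt_of_projection {R : Type*} [CommRing R]
    [IsSemisimpleModule R (R ⧸ modSocle R R)] (hess : IsEssentialSubmodule R (modSocle R R))
    {m : Ideal R} [hmax : m.IsMaximal] {a : R} (ham : a ∈ m) (hma : ∀ z ∈ m, z * a = 0)
    {P : Ideal R} (hP : P ≠ ⊥) (π : R →ₗ[R] P) (hπ : ∀ p : P, π p = p)
    (hπa : ∀ x ∈ modSocle R R, ∃ c : R, π x = c • π a) : ∃ b, IsShortAt m a b := by
  have hmul (x : R) : (π x : R) = x * π 1 := by
    rw [← smul_eq_mul, ← coe_smul, ← map_smul, smul_eq_mul, mul_one]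
  have hπ1 : (π 1 : R) ∉ m := fun h1 ↦ by
    obtain ⟨y, ⟨hyS, hyP⟩, hy⟩ := exists_mem_ne_zero_of_ne_bot (hess P hP)
    obtain ⟨c, hc⟩ := hπa y hyS
    have hπy : (π y : R) = y := congrArg Subtype.val (hπ ⟨y, hyP⟩)
    exact hy (by rw [← hπy, hc, coe_smul, hmul, mul_comm a, hma _ h1, smul_zero])
  obtain ⟨t, ht, htm⟩ := exists_notMem_mul_mem (modSocle R R) hmax.ne_top
  refine ⟨π 1 * t, ham, hmax.isPrime.mul_notMem hπ1 ht, hma, fun z hz ↦ ?_⟩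
  obtain ⟨c, hc⟩ := hπa _ (htm z hz)
  have hzt : z * t * π 1 = c * (a * π 1) := by
    rw [← hmul, ← hmul, hc, coe_smul, smul_eq_mul]
  exact ⟨c * π 1, by linear_combination hzt⟩

/-- The first property of the main theorem, for the modules in a fixed universe: every `R`-module is
almost injective. -/
def EveryModuleAlmostInjective (R : Type u) [CommRing R] : Prop :=
  ∀ (M : Type v) [AddCommGroup M] [Module R M], IsAlmostInjective.{u, v, v} R M

namespace EveryModuleAlmostInjective

theorem of_surjective {R : Type u} {S : Type w} [CommRing R] [CommRing S] [Algebra R S]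
    (hS : Function.Surjective (algebraMap R S)) (h : EveryModuleAlmostInjective.{u, v} R) :
    EveryModuleAlmostInjective.{w, v} S := by
  intro M _ _ Y _ _
  let : Module R M := .compHom M (algebraMap R S)
  let : Module R Y := .compHom Y (algebraMap R S)
  have : IsScalarTower R S M := .of_algebraMap_smul fun _ _ ↦ rfl
  have : IsScalarTower R S Y := .of_algebraMap_smul fun _ _ ↦ rfl
  exact (almostNInjective_iff_of_surjective hS).1 (h M Y)

variable {R : Type v} [CommRing R]

theorem isSemisimpleModule_quotient (h : EveryModuleAlmostInjective.{v, v} R) {Y : Type v}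
    [AddCommGroup Y] [Module R Y] {K : Submodule R Y} (hK : IsEssentialSubmodule R K) :
    IsSemisimpleModule R (Y ⧸ K) := by
  refine isSemisimpleModule_quotient_of_exists K fun T ↦ ?_
  let f : T.comap K.mkQ →ₗ[R] T := K.mkQ.restrict fun _ hy ↦ hy
  obtain ⟨g, hg⟩ | ⟨P, hP, k, π, hπ, hk⟩ := almostNInjective_iff.1 (h T Y) _ f
  · exact ⟨g, fun y hy ↦ congrArg Subtype.val (hg ⟨y, hy⟩)⟩
  · obtain ⟨p, ⟨hpK, hpP⟩, hp⟩ := exists_mem_ne_zero_of_ne_bot (hK P hP)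
    have hpK' : K.mkQ p = 0 := (Submodule.Quotient.mk_eq_zero K).2 hpK
    let x : T.comap K.mkQ := ⟨p, show K.mkQ p ∈ T from hpK' ▸ T.zero_mem⟩
    have hfx : f x = 0 := Subtype.ext hpK'
    have hπp : π p = 0 := by rw [← hk x, hfx, map_zero]
    exact absurd (congrArg Subtype.val ((hπ ⟨p, hpP⟩).symm.trans hπp)) hp

theorem isEssentialSubmodule_modSocle (h : EveryModuleAlmostInjective.{v, v} R) :
    IsEssentialSubmodule R (modSocle R R) := by
  refine isEssentialSubmodule_iff.2 fun c hc ↦ ?_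
  let L := R ⧸ Ideal.torsionOf R R c
  have hsurj : Function.Surjective (algebraMap R L) := Ideal.Quotient.mk_surjective
  have : Nontrivial L := Ideal.Quotient.nontrivial_iff.2 fun htop ↦
    hc (by simpa [Ideal.mem_torsionOf_iff] using (Ideal.eq_top_iff_one _).1 htop)
  have hL : EveryModuleAlmostInjective.{v, v} L := h.of_surjective hsurj
  obtain ⟨m, hm, x, hx, hx0⟩ : ∃ m : Ideal L, m.IsMaximal ∧ ∃ x ∈ torsionBySet L L m, x ≠ 0 := by
    by_contra! htors
    exact modSocle_ne_bot (fun K hK ↦ hL.isSemisimpleModule_quotient hK)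
      (eq_bot_iff.2 (modSocle_le htors))
  obtain ⟨r, rfl⟩ := hsurj x
  have hmk {r : R} : algebraMap R L r = 0 ↔ r * c = 0 := Ideal.Quotient.eq_zero_iff_mem
  have := Ideal.comap_isMaximal_of_surjective (K := m) (algebraMap R L) hsurj
  refine ⟨r, torsionBySet_le_modSocle (m.comap (algebraMap R L))
    (mem_torsionBySet.2 fun μ hμ ↦ ?_), fun hr ↦ hx0 (hmk.2 hr)⟩
  have hμr := mem_torsionBySet.1 hx _ hμ
  rw [smul_eq_mul, ← map_mul, hmk] at hμr
  rwa [smul_eq_mul, smul_eq_mul, ← mul_assoc]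

theorem exists_isShortAt (h : EveryModuleAlmostInjective.{v, v} R) {m : Ideal R}
    [hmax : m.IsMaximal] (hm : ¬IsPure m) : ∃ a b, IsShortAt m a b := by
  have hess := h.isEssentialSubmodule_modSocle
  have := h.isSemisimpleModule_quotient hess
  obtain ⟨a, ham, ha0, hma⟩ := exists_mem_torsionBySet_of_not_isPure hm
  have hma' : ∀ μ ∈ m, μ * a = 0 := mem_torsionBySet.1 hma
  have haS : span R {a} ≤ modSocle R R :=
    (span_singleton_le_iff_mem _ _).2 (torsionBySet_le_modSocle m hma)
  obtain ⟨f, hf⟩ := IsSemisimpleModule.extension_property (inclusion haS)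
    (inclusion_injective haS) LinearMap.id
  have hfa : f ⟨a, haS (mem_span_singleton_self a)⟩ = ⟨a, mem_span_singleton_self a⟩ :=
    LinearMap.congr_fun hf ⟨a, mem_span_singleton_self a⟩
  obtain ⟨g, hg⟩ | ⟨P, hP, k, π, hπ, hk⟩ := almostNInjective_iff.1 (h (span R {a}) R) _ f
  · refine absurd ?_ ha0
    obtain ⟨c, hc⟩ := mem_span_singleton.1 (g 1).2
    have hga : g a = a • g 1 := by rw [← map_smul, smul_eq_mul, mul_one]
    have haa : (g a : R) = a := congrArg Subtype.val ((hg ⟨a, _⟩).trans hfa)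
    rw [← haa, hga, coe_smul, ← hc, smul_comm, smul_eq_mul a a, hma' a ham, smul_zero]
  · refine ⟨a, exists_isShortAt_of_projection hess ham hma' hP π hπ fun x hx ↦ ?_⟩
    obtain ⟨c, hc⟩ := mem_span_singleton.1 (f ⟨x, hx⟩).2
    have hfx : f ⟨x, hx⟩ = c • ⟨a, mem_span_singleton_self a⟩ := Subtype.ext hc.symm
    exact ⟨c, by rw [← hk ⟨x, hx⟩, hfx, map_smul, ← hfa, hk]⟩

theorem isPureOrShortRing (h : EveryModuleAlmostInjective.{v, v} R) : IsPureOrShortRing R where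
  isSemisimpleModule_quotient := h.isSemisimpleModule_quotient h.isEssentialSubmodule_modSocle
  isPure_or_isShortAt _ _ := or_iff_not_imp_left.2 h.exists_isShortAt

end EveryModuleAlmostInjective

end EveryModuleAlmostInjective

section SelfInjective

theorem not_fg_biSup_of_iSupIndep {A M ι : Type*} [Ring A] [AddCommGroup M] [Module A M]
    {f : ι → Submodule A M} (hf : iSupIndep f) (hf0 : ∀ i, f i ≠ ⊥) {t : Set ι}
    (ht : t.Infinite) : ¬(⨆ i ∈ t, f i).FG := by
  intro hfg
  obtain ⟨F, hF⟩ := CompleteLattice.IsCompactElement.exists_finset_of_le_iSup _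
    ((fg_iff_compact _).1 hfg) _ le_rfl
  obtain ⟨j, hj, hjF⟩ := ht.exists_notMem_finset F
  have hle : f j ≤ ⨆ i ∈ (F : Set ι), f i :=
    (le_biSup f hj).trans (hF.trans (iSup₂_mono fun i _ ↦ iSup_le fun _ ↦ le_rfl))
  exact hf0 j (disjoint_self.1 ((hf.disjoint_biSup hjF).mono_right hle))

theorem exists_isCompl_not_fg {A M : Type*} [Ring A] [AddCommGroup M] [Module A M]
    [IsSemisimpleModule A M] (hM : ¬Module.Finite A M) :
    ∃ A₁ A₂ : Submodule A M, IsCompl A₁ A₂ ∧ ¬A₁.FG ∧ ¬A₂.FG := by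
  obtain ⟨s, hs, htop, hsimple⟩ := IsSemisimpleModule.exists_sSupIndep_sSup_simples_eq_top A M
  have hf := (sSupIndep_iff s).1 hs
  have hf0 (i : s) : (i : Submodule A M) ≠ ⊥ := (isSimpleModule_iff_isAtom.1 (hsimple i i.2)).1
  have hinf : (Set.univ : Set s).Infinite := fun hfin ↦ by
    have := Set.finite_univ_iff.1 hfin
    refine hM ⟨htop ▸ sSup_eq_iSup' s ▸ fg_iSup _ fun i ↦ ?_⟩
    have := hsimple i i.2
    exact Module.Finite.iff_fg.1 inferInstance
  obtain ⟨t, u, htu, hdisj, hcard⟩ := hinf.exists_union_disjoint_cardinal_eq_of_infinite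
  have hiff : t.Infinite ↔ u.Infinite := by
    rw [← Set.infinite_coe_iff, ← Set.infinite_coe_iff, Cardinal.infinite_iff,
      Cardinal.infinite_iff, hcard]
  have ht : t.Infinite := (Set.infinite_union.1 (htu ▸ hinf)).elim id hiff.2
  refine ⟨_, _, ⟨hf.disjoint_biSup_biSup hdisj, codisjoint_iff.2 ?_⟩,
    not_fg_biSup_of_iSupIndep hf hf0 ht, not_fg_biSup_of_iSupIndep hf hf0 (hiff.1 ht)⟩
  rw [← iSup_union, htu, iSup_univ, ← sSup_eq_iSup', htop]

variable {R : Type*} [CommRing R]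

theorem exists_mul_eq_self_and_mul_eq_zero (hinj : RelInjective R R R) {L : Ideal R}
    {A₁ A₂ : Submodule R L} (h : IsCompl A₁ A₂) :
    ∃ w : R, (∀ x ∈ A₁, (x : R) * w = x) ∧ ∀ x ∈ A₂, (x : R) * w = 0 := by
  obtain ⟨g, hg⟩ := hinj L (L.subtype ∘ₗ A₁.projection A₂ h)
  have hgx (x : L) : (x : R) * g 1 = A₁.projection A₂ h x := by
    rw [← smul_eq_mul, ← map_smul, smul_eq_mul, mul_one, hg]
    rfl
  exact ⟨g 1, fun x hx ↦ by rw [hgx, (A₁.projection_eq_self_iff h x).2 hx],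
    fun x hx ↦ by rw [hgx, A₁.projection_apply_eq_zero_iff h |>.2 hx]; rfl⟩

theorem fg_of_mul_eq_self {A : Ideal R} {t w : R} (htw : t * w ∈ modSocle R R)
    (hA : A ≤ Ideal.span {t}) (hw : ∀ x ∈ A, x * w = x) : A.FG := by
  have : IsSemisimpleModule R (span R {t * w}) :=
    .of_injective (inclusion ((span_singleton_le_iff_mem _ (modSocle R R)).2 htw))
      (inclusion_injective _)
  refine (isNoetherian_submodule (N := span R {t * w})).1 inferInstance A fun x hx ↦ ?_
  obtain ⟨r, hr⟩ := Ideal.mem_span_singleton'.1 (hA hx)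
  exact mem_span_singleton.2 ⟨r, by rw [smul_eq_mul, ← mul_assoc, hr, hw x hx]⟩

theorem not_fg_span_singleton_mul {m : Ideal R} [hmax : m.IsMaximal]
    (hm : torsionBySet R R m = ⊥) {t : R} (ht : t ∉ m)
    (htm : Ideal.span {t} * m ≤ modSocle R R) : ¬(Ideal.span {t} * m).FG := by
  intro hfg
  have hle : Ideal.span {t} * m ≤ m • (Ideal.span {t} * m) := fun l hl ↦ by
    obtain ⟨z, hz, h⟩ := exists_one_sub_smul_mem_torsionBySet_of_mem_modSocle m (htm hl)
    rw [hm, mem_bot, sub_smul, one_smul, sub_eq_zero] at h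
    exact h ▸ smul_mem_smul hz hl
  obtain ⟨r, hr, hrL⟩ := exists_sub_one_mem_and_smul_eq_zero_of_fg_of_le_smul m _ hfg hle
  have hrm : r ∉ m := fun h ↦ (Ideal.ne_top_iff_one m).1 hmax.ne_top (by simpa using sub_mem h hr)
  have hrt : r * t ∈ torsionBySet R R m := mem_torsionBySet.2 fun μ hμ ↦ by
    have h := hrL (t * μ) (Ideal.mul_mem_mul (Ideal.mem_span_singleton_self t) hμ)
    rw [smul_eq_mul] at h ⊢
    linear_combination h
  rw [hm, mem_bot] at hrt
  exact hmax.isPrime.mul_notMem hrm ht (hrt ▸ m.zero_mem)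

theorem torsionBySet_ne_bot_of_relInjective [IsSemisimpleModule R (R ⧸ modSocle R R)]
    (hinj : RelInjective R R R) (m : Ideal R) [hmax : m.IsMaximal] :
    torsionBySet R R m ≠ ⊥ := by
  intro hm
  obtain ⟨t, ht, htm⟩ := exists_notMem_mul_mem (modSocle R R) hmax.ne_top
  let L := Ideal.span {t} * m
  have hL {μ : R} (hμ : μ ∈ m) : t * μ ∈ L :=
    Ideal.mul_mem_mul (Ideal.mem_span_singleton_self t) hμ
  have hLS : L ≤ modSocle R R := Ideal.mul_le.2 fun x hx μ hμ ↦ by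
    obtain ⟨c, rfl⟩ := Ideal.mem_span_singleton'.1 hx
    rw [mul_assoc, mul_comm t]
    exact Ideal.mul_mem_left _ c (htm μ hμ)
  have : IsSemisimpleModule R L := .of_injective (inclusion hLS) (inclusion_injective hLS)
  obtain ⟨A₁, A₂, hcompl, hA₁, hA₂⟩ := exists_isCompl_not_fg fun hfin ↦
    not_fg_span_singleton_mul hm ht hLS (Module.Finite.iff_fg.1 hfin)
  obtain ⟨w, hw₁, hw₂⟩ := exists_mul_eq_self_and_mul_eq_zero hinj hcompl
  have hfg {v : R} (hv : v ∈ m) {A : Submodule R L} (hA : ∀ x ∈ A, (x : R) * v = x) : A.FG :=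
    fg_of_fg_map_injective L.subtype L.subtype_injective <|
      fg_of_mul_eq_self (hLS (hL hv)) ((map_subtype_le L A).trans Ideal.mul_le_left)
        (by rintro _ ⟨x, hx, rfl⟩; exact hA x hx)
  have hw : t * (w * (1 - w)) ∈ torsionBySet R R m := mem_torsionBySet.2 fun μ hμ ↦ by
    obtain ⟨x, hx, y, hy, hxy⟩ := mem_sup.1
      (hcompl.sup_eq_top ▸ mem_top : (⟨t * μ, hL hμ⟩ : L) ∈ A₁ ⊔ A₂)
    have hxy' : (x + y : R) = t * μ := congrArg Subtype.val hxy
    rw [smul_eq_mul]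
    linear_combination (1 - w) * (hw₁ x hx + hw₂ y hy) - w * (1 - w) * hxy' - hw₁ x hx
  rw [hm, mem_bot] at hw
  have hwm : w * (1 - w) ∈ m := (hmax.isPrime.mem_or_mem (hw ▸ m.zero_mem)).resolve_left ht
  obtain h | h := hmax.isPrime.mem_or_mem hwm
  · exact hA₁ (hfg h hw₁)
  · exact hA₂ (hfg h fun x hx ↦ by rw [mul_sub, mul_one, hw₂ x hx, sub_zero])

end SelfInjective

section EveryModuleSemisimpleByInjective

theorem injective_iff_forall_relInjective {R : Type u} [CommRing R] {Q : Type v} [AddCommGroup Q]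
    [Module R Q] : Module.Injective R Q ↔
      ∀ (Y : Type v) [AddCommGroup Y] [Module R Y], RelInjective R Y Q := by
  refine ⟨fun h Y _ _ K f ↦ h.out K.subtype K.subtype_injective f,
    fun h ↦ ⟨fun X Y _ _ _ _ i hi f ↦ ?_⟩⟩
  obtain ⟨g, hg⟩ := h Y _ (f ∘ₗ (LinearEquiv.ofInjective i hi).symm.toLinearMap)
  exact ⟨g, fun x ↦ by simpa using hg (LinearEquiv.ofInjective i hi x)⟩

theorem exists_eq_smul_of_relInjective {R Q : Type*} [CommRing R] [AddCommGroup Q] [Module R Q]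
    (hQ : RelInjective R R Q) {m : Ideal R} [m.IsMaximal] {a : R} (ha : a ∈ torsionBySet R R m)
    (ha0 : a ≠ 0) {x : Q} (hx : x ∈ torsionBySet R Q m) : ∃ y, x = a • y := by
  let f : R →ₗ.[R] Q := LinearPMap.mkSpanSingleton' a x fun _ hc ↦
    mem_torsionBySet.1 hx _ (mem_of_smul_eq_zero ha ha0 hc)
  obtain ⟨g, hg⟩ := hQ f.domain f.toFun
  refine ⟨g 1, ?_⟩
  rw [← map_smul, smul_eq_mul, mul_one]
  exact ((hg ⟨a, mem_span_singleton_self a⟩).trans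
    (LinearPMap.mkSpanSingleton'_apply_self _ _ _ _)).symm

theorem torsionBySet_quotient_eq_bot {R : Type*} [CommRing R] {B m : Ideal R} [m.IsMaximal]
    (hB : RelInjective R R (R ⧸ B)) {a : R} (haB : a ∈ B) (ha0 : a ≠ 0)
    (hma : a ∈ torsionBySet R R m) : torsionBySet R (R ⧸ B) m = ⊥ := by
  refine eq_bot_iff.2 fun x hx ↦ ?_
  obtain ⟨y, rfl⟩ := exists_eq_smul_of_relInjective hB hma ha0 hx
  obtain ⟨r, rfl⟩ := B.mkQ_surjective y
  rw [mem_bot, ← map_smul, mkQ_apply, Submodule.Quotient.mk_eq_zero]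
  exact B.mul_mem_right r haB

/-- The second property of the main theorem, for the modules in a fixed universe: every `R`-module
is an extension of a semisimple module by an injective module. -/
def EveryModuleSemisimpleByInjective (R : Type u) [CommRing R] : Prop :=
  ∀ (M : Type v) [AddCommGroup M] [Module R M],
    ∃ N : Submodule R M, IsSemisimpleModule R N ∧ Module.Injective R (M ⧸ N)

namespace EveryModuleSemisimpleByInjective

theorem of_surjective {R : Type u} {S : Type w} [CommRing R] [CommRing S] [Algebra R S]
    (hS : Function.Surjective (algebraMap R S)) (h : EveryModuleSemisimpleByInjective.{u, v} R) :
    EveryModuleSemisimpleByInjective.{w, v} S := by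
  intro M _ _
  let : Module R M := .compHom M (algebraMap R S)
  have : IsScalarTower R S M := .of_algebraMap_smul fun _ _ ↦ rfl
  obtain ⟨N, hN, hMN⟩ := h M
  obtain ⟨N, rfl⟩ := exists_restrictScalars_eq hS N
  refine ⟨N, (isSemisimpleModule_iff_of_surjective (M := N) hS).1 hN,
    injective_iff_forall_relInjective.2 fun Y _ _ ↦ ?_⟩
  let : Module R Y := .compHom Y (algebraMap R S)
  have : IsScalarTower R S Y := .of_algebraMap_smul fun _ _ ↦ rfl
  exact (relInjective_quotient_restrictScalars_iff hS).1
    (injective_iff_forall_relInjective.1 hMN Y)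

variable {R : Type v} [CommRing R]

theorem isSemisimpleModule_quotient_modSocle (h : EveryModuleSemisimpleByInjective.{v, v} R) :
    IsSemisimpleModule R (R ⧸ modSocle R R) := by
  refine isSemisimpleModule_quotient_of_exists _ fun T ↦ ?_
  let f : T.comap (modSocle R R).mkQ →ₗ[R] T := (modSocle R R).mkQ.restrict fun _ hy ↦ hy
  obtain ⟨N, hN, hinj⟩ := h (T.comap (modSocle R R).mkQ)
  have hNf : N ≤ LinearMap.ker f := fun x hx ↦ by
    have hxS := map_mem_modSocle (Submodule.subtype _) (le_modSocle N hx)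
    exact Subtype.ext ((Submodule.Quotient.mk_eq_zero _).2 hxS)
  obtain ⟨g, hg⟩ := hinj.out (Submodule.subtype _) (Submodule.subtype_injective _) N.mkQ
  refine ⟨N.liftQ f hNf ∘ₗ g, fun y hy ↦ ?_⟩
  rw [LinearMap.comp_apply, show g y = _ from hg ⟨y, hy⟩, mkQ_apply, liftQ_apply]
  rfl

theorem exists_ideal_ge (h : EveryModuleSemisimpleByInjective.{v, v} R) (A : Ideal R) :
    ∃ B ≥ A, IsSemisimpleModule R (Submodule.map A.mkQ B) ∧ Module.Injective R (R ⧸ B) := by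
  obtain ⟨N, hN, hinj⟩ := h (R ⧸ A)
  have hA : A ≤ N.comap A.mkQ := A.ker_mkQ.ge.trans (LinearMap.ker_le_comap A.mkQ)
  refine ⟨N.comap A.mkQ, hA, ?_, ?_⟩
  · rwa [map_comap_eq_of_surjective A.mkQ_surjective]
  · rw [injective_iff_forall_relInjective] at hinj ⊢
    intro Y _ _
    rw [← map_comap_eq_of_surjective A.mkQ_surjective N] at hinj
    exact relInjective_of_equiv (quotientQuotientEquivQuotient A _ hA) (hinj Y)

theorem torsionBySet_quotient_ne_bot (h : EveryModuleSemisimpleByInjective.{v, v} R)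
    {B m : Ideal R} (hB : Module.Injective R (R ⧸ B)) (hBm : B ≤ m) [hmax : m.IsMaximal] :
    torsionBySet R (R ⧸ B) m ≠ ⊥ := by
  have hS : Function.Surjective (algebraMap R (R ⧸ B)) := Ideal.Quotient.mk_surjective
  have := (h.of_surjective hS).isSemisimpleModule_quotient_modSocle
  have hinj : RelInjective (R ⧸ B) (R ⧸ B) (R ⧸ B) :=
    (relInjective_iff_of_surjective hS).1 (injective_iff_forall_relInjective.1 hB _)
  have : (m.map (algebraMap R (R ⧸ B))).IsMaximal :=
    Ideal.IsMaximal.map_of_surjective_of_ker_le hS (Ideal.mk_ker.trans_le hBm)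
  obtain ⟨x, hx, hx0⟩ := exists_mem_ne_zero_of_ne_bot
    (torsionBySet_ne_bot_of_relInjective hinj (m.map (algebraMap R (R ⧸ B))))
  refine ne_bot_of_le_ne_bot (b := span R {x}) (mt span_singleton_eq_bot.1 hx0) ?_
  refine (span_singleton_le_iff_mem _ _).2 (mem_torsionBySet.2 fun μ hμ ↦ ?_)
  rw [← algebraMap_smul (R ⧸ B)]
  exact mem_torsionBySet.1 hx _ (Ideal.mem_map_of_mem _ hμ)

theorem exists_isShortAt (h : EveryModuleSemisimpleByInjective.{v, v} R) {m : Ideal R}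
    [hmax : m.IsMaximal] (hm : ¬IsPure m) : ∃ a b, IsShortAt m a b := by
  have := h.isSemisimpleModule_quotient_modSocle
  obtain ⟨a, ham, ha0, hma⟩ := exists_mem_torsionBySet_of_not_isPure hm
  obtain ⟨B, hAB, hss, hinj⟩ := h.exists_ideal_ge (span R {a})
  have haB : a ∈ B := hAB (mem_span_singleton_self a)
  have hBm : ¬B ≤ m := fun hBm ↦
    h.torsionBySet_quotient_ne_bot hinj hBm
      (torsionBySet_quotient_eq_bot (injective_iff_forall_relInjective.1 hinj R) haB ha0 hma)
  obtain ⟨b, hbB, hbm⟩ := SetLike.not_le_iff_exists.1 hBm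
  obtain ⟨z, hz, hzb⟩ := exists_one_sub_smul_mem_torsionBySet m
    (⟨mkQ _ b, mem_map_of_mem hbB⟩ : Submodule.map (mkQ (span R {a})) B)
  refine ⟨a, (1 - z) * b, ham,
    hmax.isPrime.mul_notMem (one_sub_notMem hmax.ne_top hz) hbm, mem_torsionBySet.1 hma,
    fun μ hμ ↦ ?_⟩
  have hμb := congrArg Subtype.val (mem_torsionBySet.1 hzb μ hμ)
  obtain ⟨r, hr⟩ := mem_span_singleton.1 ((Submodule.Quotient.mk_eq_zero (span R {a})).1 hμb)
  exact ⟨r, (mul_comm _ μ).trans hr.symm⟩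

theorem isPureOrShortRing (h : EveryModuleSemisimpleByInjective.{v, v} R) :
    IsPureOrShortRing R where
  isSemisimpleModule_quotient := h.isSemisimpleModule_quotient_modSocle
  isPure_or_isShortAt _ _ := or_iff_not_imp_left.2 h.exists_isShortAt

end EveryModuleSemisimpleByInjective

end EveryModuleSemisimpleByInjective

section Equivalences

variable {R : Type u} [CommRing R]

theorem everyModuleAlmostInjective_iff :
    EveryModuleAlmostInjective.{u, v} R ↔ ∀ (S : Type v) [CommRing S] [Algebra R S],
      Function.Surjective (algebraMap R S) → IsPureOrShortRing S := by
  refine ⟨fun h S _ _ hS ↦ (h.of_surjective hS).isPureOrShortRing, fun h M _ _ Y _ _ ↦ ?_⟩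
  obtain ⟨S, _, _, hS, ⟨_, _⟩, ⟨_, _⟩⟩ := exists_small_scalars (R := R) M Y
  exact (almostNInjective_iff_of_surjective hS).2 (h S hS).almostNInjective

theorem everyModuleSemisimpleByInjective_iff :
    EveryModuleSemisimpleByInjective.{u, v} R ↔ ∀ (S : Type v) [CommRing S] [Algebra R S],
      Function.Surjective (algebraMap R S) → IsPureOrShortRing S := by
  refine ⟨fun h S _ _ hS ↦ (h.of_surjective hS).isPureOrShortRing, fun h M _ _ ↦ ?_⟩
  obtain ⟨N, hN, hcompl⟩ := exists_isTorsionComplement R M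
  refine ⟨N, hN, injective_iff_forall_relInjective.2 fun Y _ _ ↦ ?_⟩
  obtain ⟨S, _, _, hS, ⟨_, _⟩, ⟨_, _⟩⟩ := exists_small_scalars (R := R) M Y
  obtain ⟨N, rfl⟩ := exists_restrictScalars_eq hS N
  exact (relInjective_quotient_restrictScalars_iff hS).2
    ((h S hS).relInjective_quotient (isTorsionComplement_of_restrictScalars hS hcompl))

end Equivalences

end AlmostInjective

/-- Theorem 3.5: over a commutative ring `R`, every `R`-module is almost injective iff
every `R`-module is an extension of a semisimple module by an injective module. -/
theorem comm_every_module_almostInjective_iff (R : Type u) [CommRing R] :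
    (∀ (M : Type v) [AddCommGroup M] [Module R M], IsAlmostInjective.{u, v, v} R M) ↔
    (∀ (M : Type v) [AddCommGroup M] [Module R M],
      ∃ N : Submodule R M, IsSemisimpleModule R ↥N ∧ Module.Injective R (M ⧸ N)) :=
  AlmostInjective.everyModuleAlmostInjective_iff.trans
    AlmostInjective.everyModuleSemisimpleByInjective_iff.symm
end

section
/- Let R be a ring and M a right R-module such that every simple module in σ(M) is almost projective. Then every module in σ(M) that is not semisimple contains a nonzero M-injective submodule; in particular, for every non-semisimple cyclic module xR ∈ σ(M) with essential maximal submodule N, any injective hull of xR in σ(M) has a nonzero direct summand contained in xR. -/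
universe u v w

/-!
Let `L` be an essential maximal submodule of `X ∈ σ(M)`, and let `X` embed in `E`. The simple module
`X ⧸ L` is almost projective, and the map `X ⧸ L → E ⧸ L` cannot be lifted to `E`, since a lift
would take values in `X` and split off the essential submodule `L`. The other alternative in the
definition gives a nonzero direct summand `D` of `E` whose image in `E ⧸ L` lies in `X ⧸ L`, that
is, `D ≤ X`.

If `N ∈ σ(M)` is not semisimple, neither is some cyclic submodule `X` of `N`; a maximal submodule
of `X` above its socle is essential. Embedding `X` in an `M`-injective module `E`, the summand `D`
is `M`-injective and lies in `X ≤ N`.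
-/

section LinearAlgebra

variable {A : Type u} [Ring A] {X : Type v} [AddCommGroup X] [Module A X]
  {Y : Type w} [AddCommGroup Y] [Module A Y]

theorem mapQ_map_injective {g : X →ₗ[A] Y} (hg : Function.Injective g) (L : Submodule A X) :
    Function.Injective (L.mapQ (L.map g) g (L.le_comap_map g)) := by
  rw [← LinearMap.ker_eq_bot, Submodule.ker_mapQ, Submodule.comap_map_eq_of_injective hg,
    Submodule.mkQ_map_self]

theorem mem_range_of_mkQ_eq_mapQ {L : Submodule A X} {g : X →ₗ[A] Y} {y : Y} {q : X ⧸ L}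
    (h : (L.map g).mkQ y = L.mapQ (L.map g) g (L.le_comap_map g) q) : y ∈ LinearMap.range g := by
  obtain ⟨x, rfl⟩ := L.mkQ_surjective q
  have hmem : y - g x ∈ L.map g := (Submodule.Quotient.eq _).1 h
  exact (Submodule.sub_mem_iff_left _ (LinearMap.mem_range_self g x)).1
    (LinearMap.map_le_range hmem)

theorem exists_comp_eq_of_range_le_range {Z : Type*} [AddCommGroup Z] [Module A Z]
    {f : Z →ₗ[A] Y} {g : X →ₗ[A] Y} (hg : Function.Injective g)
    (hfg : LinearMap.range f ≤ LinearMap.range g) : ∃ h : Z →ₗ[A] X, g ∘ₗ h = f := by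
  let e : X ≃ₗ[A] LinearMap.range g := LinearEquiv.ofInjective g hg
  refine ⟨e.symm ∘ₗ f.codRestrict _ fun z => hfg (LinearMap.mem_range_self f z), ?_⟩
  ext z
  exact congrArg Subtype.val (e.apply_symm_apply _)

theorem isDirectSummand_of_mkQ_rightInverse {L : Submodule A X} {s : X ⧸ L →ₗ[A] X}
    (hs : Function.RightInverse s L.mkQ) : IsDirectSummand A L := by
  have hproj : LinearMap.IsProj (LinearMap.range s) (s ∘ₗ L.mkQ) :=
    ⟨fun x => LinearMap.mem_range_self s _, by rintro _ ⟨q, rfl⟩; exact congrArg s (hs q)⟩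
  have hker : LinearMap.ker (s ∘ₗ L.mkQ) = L := by
    rw [LinearMap.ker_comp_of_ker_eq_bot _ (LinearMap.ker_eq_bot.2 hs.injective), L.ker_mkQ]
  have hcompl : IsCompl (LinearMap.ker (s ∘ₗ L.mkQ)) (LinearMap.range s) := hproj.isCompl.symm
  rw [hker] at hcompl
  exact ⟨LinearMap.range s, hcompl⟩

end LinearAlgebra

section InSigma

variable {A : Type u} [Ring A] {M : Type v} [AddCommGroup M] [Module A M]
  {X : Type w} [AddCommGroup X] [Module A X]

theorem InSigma.of_surjective_of_injective {ι : Type v} {Q : Type*} [AddCommGroup Q] [Module A Q]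
    {p : (ι →₀ M) →ₗ[A] Q} (hp : Function.Surjective p)
    {g : X →ₗ[A] Q} (hg : Function.Injective g) : InSigma A M X := by
  let i : X →ₗ[A] (ι →₀ M) ⧸ LinearMap.ker p := (p.quotKerEquivOfSurjective hp).symm ∘ₗ g
  have hi : Function.Injective i := (p.quotKerEquivOfSurjective hp).symm.injective.comp hg
  exact ⟨ι, LinearMap.ker p, LinearMap.range i, ⟨LinearEquiv.ofInjective i hi⟩⟩

theorem InSigma.exists_surjective_injective (hX : InSigma A M X) :
    ∃ (ι Q : Type v) (_ : AddCommGroup Q) (_ : Module A Q)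
      (p : (ι →₀ M) →ₗ[A] Q) (g : X →ₗ[A] Q), Function.Surjective p ∧ Function.Injective g := by
  obtain ⟨ι, K, P, ⟨e⟩⟩ := hX
  exact ⟨ι, (ι →₀ M) ⧸ K, inferInstance, inferInstance, K.mkQ, P.subtype ∘ₗ e.toLinearMap,
    K.mkQ_surjective, P.injective_subtype.comp e.injective⟩

theorem InSigma.submodule (hX : InSigma A M X) (Y : Submodule A X) : InSigma A M Y := by
  obtain ⟨ι, Q, _, _, p, g, hp, hg⟩ := hX.exists_surjective_injective
  exact .of_surjective_of_injective (g := g ∘ₗ Y.subtype) hp (hg.comp Y.injective_subtype)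

theorem InSigma.quotient (hX : InSigma A M X) (L : Submodule A X) : InSigma A M (X ⧸ L) := by
  obtain ⟨ι, Q, _, _, p, g, hp, hg⟩ := hX.exists_surjective_injective
  exact .of_surjective_of_injective (p := (L.map g).mkQ ∘ₗ p)
    ((L.map g).mkQ_surjective.comp hp) (mapQ_map_injective hg L)

theorem InSigma.annihilator_le (hX : InSigma A M X) :
    Module.annihilator A M ≤ Module.annihilator A X := by
  obtain ⟨ι, Q, _, _, p, g, hp, hg⟩ := hX.exists_surjective_injective
  calc Module.annihilator A M
      ≤ Module.annihilator A (ι →₀ M) := fun a ha => Module.mem_annihilator.2 fun y =>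
        Finsupp.ext fun i => Module.mem_annihilator.1 ha (y i)
    _ ≤ Module.annihilator A Q := p.annihilator_le_of_surjective hp
    _ ≤ Module.annihilator A X := g.annihilator_le_of_injective hg

end InSigma

section RelInjective

variable {A : Type u} [Ring A] {M : Type v} [AddCommGroup M] [Module A M]

theorem RelInjective.of_retract {E U : Type*} [AddCommGroup E] [Module A E]
    [AddCommGroup U] [Module A U] (hE : RelInjective A M E) {i : U →ₗ[A] E} {r : E →ₗ[A] U}
    (hri : Function.LeftInverse r i) : RelInjective A M U := by
  intro K f
  obtain ⟨g, hg⟩ := hE K (i ∘ₗ f)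
  exact ⟨r ∘ₗ g, fun x => by rw [LinearMap.comp_apply, hg, LinearMap.comp_apply, hri]⟩

theorem RelInjective.congr {E U : Type*} [AddCommGroup E] [Module A E]
    [AddCommGroup U] [Module A U] (hE : RelInjective A M E) (e : E ≃ₗ[A] U) :
    RelInjective A M U :=
  hE.of_retract (i := e.symm.toLinearMap) (r := e.toLinearMap) e.apply_symm_apply

theorem RelInjective.of_isDirectSummand {E : Type*} [AddCommGroup E] [Module A E]
    (hE : RelInjective A M E) {D : Submodule A E} (hD : IsDirectSummand A D) :
    RelInjective A M D := by
  obtain ⟨C, hC⟩ := hD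
  exact hE.of_retract (i := D.subtype) (Submodule.projectionOnto_apply_left hC)

theorem RelInjective.exists_submodule_ne_bot {U N : Type*} [AddCommGroup U] [Module A U]
    [Nontrivial U] [AddCommGroup N] [Module A N] (hU : RelInjective A M U) {i : U →ₗ[A] N}
    (hi : Function.Injective i) : ∃ V : Submodule A N, V ≠ ⊥ ∧ RelInjective A M V := by
  let e : U ≃ₗ[A] LinearMap.range i := LinearEquiv.ofInjective i hi
  exact ⟨LinearMap.range i, Submodule.nontrivial_iff_ne_bot.1 e.symm.toEquiv.nontrivial,
    hU.congr e⟩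

theorem RelInjective.of_ringHom_surjective {B : Type*} [Ring B] {φ : A →+* B}
    (hφ : Function.Surjective φ) [Module B M] (hM : ∀ (a : A) (m : M), φ a • m = a • m)
    {E : Type*} [AddCommGroup E] [Module A E] [Module B E]
    (hE : ∀ (a : A) (e : E), φ a • e = a • e) (h : RelInjective B M E) :
    RelInjective A M E := by
  intro K f
  let K' : Submodule B M :=
    { K with
      smul_mem' := hφ.forall.2 fun a x hx => (hM a x).symm ▸ K.smul_mem a hx }
  let f' : K' →ₗ[B] E :=
    { toFun := f
      map_add' := f.map_add
      map_smul' := hφ.forall.2 fun a x =>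
        (congrArg f (Subtype.ext (hM a x))).trans ((f.map_smul a x).trans (hE a _).symm) }
  obtain ⟨g, hg⟩ := h K' f'
  let g' : M →ₗ[A] E :=
    { g with
      map_smul' := fun a m =>
        (congrArg g (hM a m)).symm.trans ((g.map_smul (φ a) m).trans (hE a _)) }
  exact ⟨g', hg⟩

theorem small_quotient_annihilator (A : Type u) [Ring A] (M : Type v) [AddCommGroup M]
    [Module A M] : Small.{v} (A ⧸ Module.annihilator A M) := by
  let toEnd : A ⧸ Module.annihilator A M →+* AddMonoid.End M :=
    RingHom.kerLift (Module.toAddMonoidEnd A M)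
  have htoEnd : Function.Injective toEnd := RingHom.kerLift_injective _
  exact small_of_injective (DFunLike.coe_injective.comp htoEnd)

theorem exists_injective_embedding {B : Type u} [Ring B] [Small.{v} B]
    (X : Type v) [AddCommGroup X] [Module B X] :
    ∃ (E : Type v) (_ : AddCommGroup E) (_ : Module B E) (j : X →ₗ[B] E),
      Module.Injective B E ∧ Function.Injective j := by
  obtain ⟨⟨E, _, f, hf⟩⟩ :=
    CategoryTheory.EnoughInjectives.presentation (ModuleCat.of B X)
  exact ⟨E, inferInstance, inferInstance, f.hom, Module.injective_module_of_injective_object B E,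
    (ModuleCat.mono_iff_injective f).1 hf⟩

-- `A` itself need not be `v`-small, but `A ⧸ ann M` is, so injective modules over that quotient
-- can be found in the universe of `M`.
theorem exists_relInjective_embedding {X : Type v} [AddCommGroup X] [Module A X]
    (hX : Module.annihilator A M ≤ Module.annihilator A X) :
    ∃ (E : Type v) (_ : AddCommGroup E) (_ : Module A E) (j : X →ₗ[A] E),
      RelInjective A M E ∧ Function.Injective j := by
  let I : Ideal A := Module.annihilator A M
  let _ : Module (A ⧸ I) M := (Module.isTorsionBySet_annihilator A M).module
  have hXI : Module.IsTorsionBySet A X I := fun _ a => Module.mem_annihilator.1 (hX a.2) _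
  let _ : Module (A ⧸ I) X := hXI.module
  have : Small.{v} (A ⧸ I) := small_quotient_annihilator A M
  obtain ⟨E, _, _, j, hE, hj⟩ := exists_injective_embedding (B := A ⧸ I) X
  let _ : Module A E := Module.compHom E (Ideal.Quotient.mk I)
  have hME : RelInjective (A ⧸ I) M E := fun K => hE.out K.subtype K.injective_subtype
  let jA : X →ₗ[A] E := { j with map_smul' := fun a => j.map_smul (Ideal.Quotient.mk I a) }
  exact ⟨E, inferInstance, inferInstance, jA,
    hME.of_ringHom_surjective Ideal.Quotient.mk_surjective (fun _ _ => rfl) (fun _ _ => rfl), hj⟩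

end RelInjective

section Essential

variable {A : Type u} [Ring A] {X : Type w} [AddCommGroup X] [Module A X]

theorem IsEssentialSubmodule.not_isDirectSummand {L : Submodule A X}
    (hess : IsEssentialSubmodule A L) (hL : L ≠ ⊤) : ¬ IsDirectSummand A L := by
  rintro ⟨C, hC⟩
  have hC_bot : C = ⊥ := not_not.1 fun h => hess C h hC.inf_eq_bot
  exact hL (eq_top_of_isCompl_bot (hC_bot ▸ hC))

theorem IsEssentialSubmodule.of_isCoatom_of_modSocle_le {L : Submodule A X} (hL : IsCoatom L)
    (hsocle : modSocle A X ≤ L) : IsEssentialSubmodule A L := by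
  intro K hK hLK
  have hKL : ¬ K ≤ L := fun h => hK ((inf_eq_right.2 h).symm.trans hLK)
  have hcompl : IsCompl L K :=
    ⟨disjoint_iff.2 hLK, not_not.1 fun h => hKL (hL.not_codisjoint_iff_le.1 h)⟩
  have hK_atom : IsAtom K := hcompl.isCoatom_iff_isAtom.1 hL
  exact hKL (le_trans (le_sSup hK_atom) hsocle)

theorem isSemisimpleModule_of_modSocle_eq_top (h : modSocle A X = ⊤) : IsSemisimpleModule A X :=
  .of_sSup_simples_eq_top <| by simpa only [isSimpleModule_iff_isAtom, modSocle] using h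

theorem exists_isCoatom_isEssentialSubmodule [IsCoatomic (Submodule A X)]
    (hX : ¬ IsSemisimpleModule A X) :
    ∃ L : Submodule A X, IsCoatom L ∧ IsEssentialSubmodule A L := by
  have hsocle : modSocle A X ≠ ⊤ := fun h => hX (isSemisimpleModule_of_modSocle_eq_top h)
  obtain ⟨L, hL, hle⟩ := (eq_top_or_exists_le_coatom (modSocle A X)).resolve_left hsocle
  exact ⟨L, hL, .of_isCoatom_of_modSocle_le hL hle⟩

theorem exists_span_singleton_not_isSemisimpleModule (hX : ¬ IsSemisimpleModule A X) :
    ∃ x : X, ¬ IsSemisimpleModule A (Submodule.span A {x}) := by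
  by_contra! h
  exact hX (isSemisimpleModule_of_isSemisimpleModule_submodule' h <| by
    rw [← Submodule.span_range_eq_iSup, Set.range_id', Submodule.span_univ])

end Essential

section AlmostProjective

variable {A : Type u} [Ring A] {X : Type v} [AddCommGroup X] [Module A X]
  {E : Type w} [AddCommGroup E] [Module A E]

theorem AlmostNProjective.exists_isDirectSummand_le_range {L : Submodule A X}
    (hE : AlmostNProjective A (X ⧸ L) E) (hL : ¬ IsDirectSummand A L)
    {j : X →ₗ[A] E} (hj : Function.Injective j) :
    ∃ D : Submodule A E, D ≠ ⊥ ∧ IsDirectSummand A D ∧ D ≤ LinearMap.range j := by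
  let f : X ⧸ L →ₗ[A] E ⧸ L.map j := L.mapQ (L.map j) j (L.le_comap_map j)
  rcases hE (L.map j) f with ⟨h, hlift⟩ | ⟨D, hD, hsummand, h', hfactor⟩
  · have hrange : LinearMap.range h ≤ LinearMap.range j := by
      rintro _ ⟨q, rfl⟩
      exact mem_range_of_mkQ_eq_mapQ (hlift q)
    obtain ⟨s, rfl⟩ := exists_comp_eq_of_range_le_range hj hrange
    have hs : Function.RightInverse s L.mkQ := fun q => mapQ_map_injective hj L (hlift q)
    exact absurd (isDirectSummand_of_mkQ_rightInverse hs) hL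
  · exact ⟨D, hD, hsummand, fun e he => mem_range_of_mkQ_eq_mapQ (hfactor ⟨e, he⟩)⟩

end AlmostProjective

theorem simple_almostProjective_consequences_general (A : Type u) [Ring A]
    (M : Type v) [AddCommGroup M] [Module A M]
    (hsimple : ∀ (S : Type v) [AddCommGroup S] [Module A S],
      IsSimpleModule A S → InSigma A M S → IsAlmostProjective.{u, v, v} A S) :
    (∀ (N : Type v) [AddCommGroup N] [Module A N], InSigma A M N →
      ¬ IsSemisimpleModule A N → ∃ U : Submodule A N, U ≠ ⊥ ∧ RelInjective A M U) ∧
    (∀ (X : Type v) [AddCommGroup X] [Module A X], InSigma A M X →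
      ∀ L : Submodule A X, IsCoatom L → IsEssentialSubmodule A L →
      ∀ (E : Type v) [AddCommGroup E] [Module A E] (j : X →ₗ[A] E), Function.Injective j →
        ∃ D : Submodule A E, D ≠ ⊥ ∧ IsDirectSummand A D ∧ D ≤ LinearMap.range j) := by
  have hquotient {X : Type v} [AddCommGroup X] [Module A X] (hX : InSigma A M X)
      {L : Submodule A X} (hL : IsCoatom L) : IsAlmostProjective.{u, v, v} A (X ⧸ L) :=
    hsimple _ (isSimpleModule_iff_isCoatom.2 hL) (hX.quotient L)
  constructor
  · intro N _ _ hN hN_semisimple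
    obtain ⟨x, hx⟩ := exists_span_singleton_not_isSemisimpleModule hN_semisimple
    obtain ⟨L, hL, hess⟩ := exists_isCoatom_isEssentialSubmodule hx
    have hspan : InSigma A M (Submodule.span A {x}) := hN.submodule _
    obtain ⟨E, _, _, j, hE, hj⟩ := exists_relInjective_embedding hspan.annihilator_le
    obtain ⟨D, hD, hD_summand, hDj⟩ := (hquotient hspan hL E).exists_isDirectSummand_le_range
      (hess.not_isDirectSummand hL.1) hj
    obtain ⟨i, hi⟩ := exists_comp_eq_of_range_le_range hj (D.range_subtype.trans_le hDj)
    have hi_inj : Function.Injective i := .of_comp (f := j) (by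
      rw [← LinearMap.coe_comp, hi]; exact D.injective_subtype)
    have : Nontrivial D := Submodule.nontrivial_iff_ne_bot.2 hD
    exact (hE.of_isDirectSummand hD_summand).exists_submodule_ne_bot
      (i := (Submodule.span A {x}).subtype ∘ₗ i) (Subtype.val_injective.comp hi_inj)
  · intro X _ _ hX L hL hess E _ _ j hj
    exact (hquotient hX hL E).exists_isDirectSummand_le_range (hess.not_isDirectSummand hL.1) hj

/-- If every simple module in `σ(M)` is almost projective, then every non-semisimple
module in `σ(M)` contains a nonzero `M`-injective submodule; in particular, for every
non-semisimple cyclic module `xR ∈ σ(M)` with an essential maximal submodule, any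
injective hull of `xR` in `σ(M)` has a nonzero direct summand contained in `xR`. -/
theorem simple_almostProjective_consequences (R : Type u) [Ring R]
    (M : Type v) [AddCommGroup M] [Module Rᵐᵒᵖ M]
    (hsimple : ∀ (S : Type v) [AddCommGroup S] [Module Rᵐᵒᵖ S],
      IsSimpleModule Rᵐᵒᵖ S → InSigma Rᵐᵒᵖ M S → IsAlmostProjective.{u, v, v} Rᵐᵒᵖ S) :
    (∀ (N : Type v) [AddCommGroup N] [Module Rᵐᵒᵖ N], InSigma Rᵐᵒᵖ M N →
      ¬ IsSemisimpleModule Rᵐᵒᵖ N →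
        ∃ U : Submodule Rᵐᵒᵖ N, U ≠ ⊥ ∧ RelInjective Rᵐᵒᵖ M ↥U) ∧
    (∀ (X : Type v) [AddCommGroup X] [Module Rᵐᵒᵖ X], InSigma Rᵐᵒᵖ M X →
      (∃ x : X, Submodule.span Rᵐᵒᵖ ({x} : Set X) = ⊤) →
      ¬ IsSemisimpleModule Rᵐᵒᵖ X →
      ∀ N : Submodule Rᵐᵒᵖ X, IsCoatom N → IsEssentialSubmodule Rᵐᵒᵖ N →
      ∀ (E : Type v) [AddCommGroup E] [Module Rᵐᵒᵖ E], InSigma Rᵐᵒᵖ M E →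
        (∀ (W : Type v) [AddCommGroup W] [Module Rᵐᵒᵖ W], InSigma Rᵐᵒᵖ M W →
          RelInjective Rᵐᵒᵖ W E) →
        ∀ j : X →ₗ[Rᵐᵒᵖ] E, Function.Injective j →
          IsEssentialSubmodule Rᵐᵒᵖ (LinearMap.range j) →
          ∃ D : Submodule Rᵐᵒᵖ E, D ≠ ⊥ ∧ IsDirectSummand Rᵐᵒᵖ D ∧
            D ≤ LinearMap.range j) := by
  obtain ⟨hinjective, hsummand⟩ := simple_almostProjective_consequences_general Rᵐᵒᵖ M hsimple
  exact ⟨hinjective, fun X _ _ hX _ _ L hL hess E _ _ _ _ j hj _ => hsummand X hX L hL hess E j hj⟩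
end
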